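/- arXiv:1203.1955 — 3 statements merged into one kernel-verified Lean document; each statement's English description precedes it below -/
import Mathlib

section
/- Let R be a commutative noetherian local ring, M a finitely generated R-module, a an element of R, n an integer and t a nonnegative integer. Suppose that a·Tor_n^R(M,X) = 0 and a·Tor_{n-1}^R(M,X) = 0 for every finitely generated R-module X whose dimension is at most t. Then a²·Tor_n^R(M,X) = 0 for every finitely generated R-module X whose dimension is at most t+1. -/
open CategoryTheory IsLocalRing

noncomputable section

/-- The `i`-th Tor module of two `R`-modules, as an object of `ModuleCat R`. -/
def TorMod (R : Type) [CommRing R] (i : ℕ) (M N : ModuleCat.{0} R) : ModuleCat.{0} R :=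
  ((Tor (ModuleCat.{0} R) i).obj M).obj N

/-- The `i`-th Ext module of two `R`-modules, as an object of `ModuleCat R`. -/
def ExtMod (R : Type) [CommRing R] (i : ℕ) (M N : ModuleCat.{0} R) : ModuleCat.{0} R :=
  ((Ext R (ModuleCat.{0} R) i).obj (Opposite.op M)).obj N

/-- Integer-indexed Tor: `Tor_n = 0` for `n < 0`. -/
def TorZ (R : Type) [CommRing R] (n : ℤ) (M N : ModuleCat.{0} R) : ModuleCat.{0} R :=
  if 0 ≤ n then TorMod R n.toNat M N else ModuleCat.of R PUnit

/-- Integer-indexed Ext: `Ext^n = 0` for `n < 0`. -/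
def ExtZ (R : Type) [CommRing R] (n : ℤ) (M N : ModuleCat.{0} R) : ModuleCat.{0} R :=
  if 0 ≤ n then ExtMod R n.toNat M N else ModuleCat.of R PUnit

/-- The depth of a module `N` over a local ring `S`, defined as the infimum of the set of
integers `i` such that `Ext^i(k, N) ≠ 0`, where `k` is the residue field of `S`
(`⊤` if no such `i` exists). -/
def moduleDepth (S : Type) [CommRing S] [IsLocalRing S] (N : Type) [AddCommGroup N]
    [Module S N] : ℕ∞ :=
  sInf {i : ℕ∞ | ∃ j : ℕ, i = (j : ℕ∞) ∧
    Nontrivial (ExtMod S j (ModuleCat.of S (ResidueField S)) (ModuleCat.of S N))}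

/-- A local ring is regular if it is noetherian and its maximal ideal can be generated by
(Krull dimension of `S`)-many elements. -/
def IsRegularLocal (S : Type) [CommRing S] [IsLocalRing S] : Prop :=
  IsNoetherianRing S ∧ ∃ s : Finset S, Ideal.span (s : Set S) = maximalIdeal S ∧
    (s.card : WithBot ℕ∞) = ringKrullDim S

/-- A local ring is Cohen-Macaulay if its depth (as a module over itself) equals its
Krull dimension. -/
def IsCMLocalRing (R : Type) [CommRing R] [IsLocalRing R] : Prop :=
  (moduleDepth R R : WithBot ℕ∞) = ringKrullDim R

/-- A module `M` over a local ring `R` is maximal Cohen-Macaulay if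
`depth M_p ≥ dim R_p` for every prime ideal `p` of `R`. -/
def IsMCMModule (R : Type) [CommRing R] [IsLocalRing R] (M : Type) [AddCommGroup M]
    [Module R M] : Prop :=
  ∀ (p : Ideal R) [p.IsPrime],
    ringKrullDim (Localization.AtPrime p) ≤
      (moduleDepth (Localization.AtPrime p) (LocalizedModule p.primeCompl M) : WithBot ℕ∞)

/-- Membership in `CM(R)`: finitely generated maximal Cohen-Macaulay modules. -/
def MemCM (R : Type) [CommRing R] [IsLocalRing R] (M : ModuleCat.{0} R) : Prop :=
  Module.Finite R M ∧ IsMCMModule R M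

/-- Membership in `CM₀(R)`: finitely generated maximal Cohen-Macaulay modules that are
locally free on the punctured spectrum. -/
def MemCM0 (R : Type) [CommRing R] [IsLocalRing R] (M : ModuleCat.{0} R) : Prop :=
  Module.Finite R M ∧ IsMCMModule R M ∧
    ∀ (p : Ideal R) [p.IsPrime], p ≠ maximalIdeal R →
      Module.Free (Localization.AtPrime p) (LocalizedModule p.primeCompl M)

/-- The singular locus of `R`: primes `p` such that `R_p` is not regular. -/
def singularLocus (R : Type) [CommRing R] : Set (PrimeSpectrum R) :=
  {p | ¬ IsRegularLocal (Localization.AtPrime p.asIdeal)}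

/-- The nonfree locus of a module `M`: primes `p` such that `M_p` is not a free
`R_p`-module. -/
def nonfreeLocus (R : Type) [CommRing R] (M : Type) [AddCommGroup M] [Module R M] :
    Set (PrimeSpectrum R) :=
  {p | ¬ Module.Free (Localization.AtPrime p.asIdeal)
        (LocalizedModule p.asIdeal.primeCompl M)}

/-- `K` is a first syzygy of `N` in a minimal free resolution: there is a surjection
`f : R^n → N` with `ker f ⊆ m·R^n` and `K ≅ ker f`. -/
def IsMinimalSyzygy1 (R : Type) [CommRing R] [IsLocalRing R] (N K : ModuleCat.{0} R) : Prop :=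
  ∃ (n : ℕ) (f : (Fin n → R) →ₗ[R] N), Function.Surjective f ∧
    LinearMap.ker f ≤ (maximalIdeal R) • (⊤ : Submodule R (Fin n → R)) ∧
    Nonempty (K ≃ₗ[R] LinearMap.ker f)

/-- `K` is a `d`-th syzygy of `N` in a minimal free resolution. -/
def IsMinimalSyzygy (R : Type) [CommRing R] [IsLocalRing R] :
    ℕ → ModuleCat.{0} R → ModuleCat.{0} R → Prop
  | 0, N, K => Nonempty ((K : Type) ≃ₗ[R] N)
  | d + 1, N, K => ∃ L : ModuleCat.{0} R, IsMinimalSyzygy1 R N L ∧ IsMinimalSyzygy R d L K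

/-- A module is indecomposable if it is nonzero and is not isomorphic to the direct sum of
two nonzero modules. -/
def IndecomposableModule (R : Type) [CommRing R] (M : Type) [AddCommGroup M] [Module R M] :
    Prop :=
  Nontrivial M ∧ ∀ (A B : Type) [AddCommGroup A] [Module R A] [AddCommGroup B] [Module R B],
    Nonempty (M ≃ₗ[R] A × B) → (Subsingleton A ∨ Subsingleton B)

/-!
Fix `n` and write `F = Tor_n(M, -)`: an `R`-linear functor which preserves finite modules and is
half-exact, i.e. exact in the middle of the image of a short exact sequence. Given `X` of dimension
at most `t + 1`, prime avoidance gives `r` in the maximal ideal lying in no minimal prime of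
`Ann X`, unless `X` already has dimension at most `0`. The submodule `L` of `r`-power torsion of `X`
is killed by a power of `r`, so it has dimension at most `t` and `a F(L) = 0`. On `Y = X / L` the
element `r` is regular and every `Y / r ^ k Y` has dimension at most `t`, so half-exactness along
`r ^ k : Y → Y` gives `a F(Y) ⊆ r ^ k F(Y)` for all `k`; hence `a F(Y) = 0` by Krull's intersection
theorem. Half-exactness along `0 → L → X → Y → 0` then gives `a ^ 2 F(X) = 0`.

Half-exactness of left derived functors comes from a resolution of the whole short exact sequence,
built as a mapping cylinder: enlarging the resolution of `X` by the contractible cone of the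
resolution of `L` makes the lift of `L → X` degreewise split, and its cokernel resolves `Y`.
-/

section Dimension

open Module Pointwise

variable {R X Y : Type*} [CommRing R] [AddCommGroup X] [Module R X] [AddCommGroup Y] [Module R Y]

lemma support_subset_support_quotSMulTop_of_pow_mem_annihilator [Module.Finite R X] {r : R} {k : ℕ}
    (hsupp : support R Y ⊆ support R X) (hr : r ^ k ∈ annihilator R Y) :
    support R Y ⊆ support R (QuotSMulTop r X) := by
  rw [support_quotSMulTop]
  refine Set.subset_inter hsupp fun p hp ↦ ?_
  rw [PrimeSpectrum.mem_zeroLocus, Set.singleton_subset_iff]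
  exact p.isPrime.mem_of_pow_mem k (annihilator_le_of_mem_support hp hr)

lemma supportDim_succ_le_of_pow_mem_annihilator [Module.Finite R X] {r : R} {k : ℕ}
    (hsupp : support R Y ⊆ support R X) (hr : r ^ k ∈ annihilator R Y)
    (hmin : ∀ p ∈ (annihilator R X).minimalPrimes, r ∉ p) :
    supportDim R Y + 1 ≤ supportDim R X := by
  have hsub := support_subset_support_quotSMulTop_of_pow_mem_annihilator hsupp hr
  have hle : supportDim R Y ≤ supportDim R (QuotSMulTop r X) :=
    Order.krullDim_le_of_strictMono (Set.inclusion hsub) fun _ _ hpq ↦ hpq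
  exact (add_le_add_left hle 1).trans
    (supportDim_quotSMulTop_succ_le_of_notMem_minimalPrimes hmin)

variable [IsLocalRing R]

lemma supportDim_nonpos_of_maximalIdeal_mem_minimalPrimes
    (hX : maximalIdeal R ∈ (annihilator R X).minimalPrimes) :
    supportDim R X ≤ 0 := by
  have hpoint (p : support R X) : p.1 = closedPoint R := PrimeSpectrum.ext <|
    le_antisymm (le_maximalIdeal p.1.isPrime.ne_top)
      (hX.2 ⟨p.1.isPrime, annihilator_le_of_mem_support p.2⟩ (le_maximalIdeal p.1.isPrime.ne_top))
  have : Subsingleton (support R X) :=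
    ⟨fun p q ↦ Subtype.ext ((hpoint p).trans (hpoint q).symm)⟩
  exact Order.krullDim_nonpos_of_subsingleton

lemma exists_mem_maximalIdeal_forall_notMem_minimalPrimes [IsNoetherianRing R] {I : Ideal R}
    (hI : maximalIdeal R ∉ I.minimalPrimes) :
    ∃ r ∈ maximalIdeal R, ∀ p ∈ I.minimalPrimes, r ∉ p := by
  by_contra! hcover
  have hunion : (maximalIdeal R : Set R) ⊆ ⋃ p ∈ I.minimalPrimes, (p : Set R) := fun r hr ↦ by
    simpa only [Set.mem_iUnion, exists_prop, SetLike.mem_coe] using hcover r hr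
  obtain ⟨p, hp, hle⟩ := (Ideal.subset_union_prime_finite
    (I.finite_minimalPrimes_of_isNoetherianRing R) (f := id) ⊥ ⊥ fun p hp _ _ ↦ hp.1.1).1 hunion
  exact hI ((maximalIdeal.isMaximal R).eq_of_le hp.1.1.ne_top hle ▸ hp)

end Dimension

section Torsion

open Module

variable {R X : Type*} [CommRing R] [AddCommGroup X] [Module R X]

lemma exists_isSMulRegular_quotient_torsionBy_pow [IsNoetherian R X] (r : R) :
    ∃ N : ℕ, IsSMulRegular (X ⧸ Submodule.torsionBy R X (r ^ N)) r := by
  let torsion : ℕ →o Submodule R X :=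
    { toFun := fun i ↦ Submodule.torsionBy R X (r ^ i)
      monotone' := fun i j hij ↦ Submodule.torsionBy_le_torsionBy_of_dvd _ _ (pow_dvd_pow r hij) }
  obtain ⟨N, hN⟩ := monotone_stabilizes_iff_noetherian.mpr ‹_› torsion
  refine ⟨N, .of_right_eq_zero_of_smul fun y hy ↦ ?_⟩
  obtain ⟨x, rfl⟩ := Submodule.Quotient.mk_surjective _ y
  rw [← Submodule.Quotient.mk_smul, Submodule.Quotient.mk_eq_zero, Submodule.mem_torsionBy_iff,
    ← mul_smul, ← pow_succ] at hy
  rw [Submodule.Quotient.mk_eq_zero]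
  exact (hN (N + 1) N.le_succ).ge hy

lemma mem_annihilator_torsionBy (r : R) : r ∈ annihilator R (Submodule.torsionBy R X r) :=
  mem_annihilator.2 fun x ↦ Submodule.smul_torsionBy r x

open Pointwise in
lemma mem_annihilator_quotSMulTop (r : R) : r ∈ annihilator R (QuotSMulTop r X) := by
  rw [mem_annihilator]
  intro y
  obtain ⟨x, rfl⟩ := Submodule.Quotient.mk_surjective _ y
  exact (Submodule.Quotient.mk_eq_zero _).2 (Submodule.smul_mem_pointwise_smul x r ⊤ trivial)

end Torsion

section HalfExact

open Module Limits

universe u v w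

/-- A functor is half-exact if it sends short exact sequences to complexes which are exact in the
middle. -/
def IsHalfExact {C D : Type*} [Category C] [Category D] [HasZeroMorphisms C] [HasZeroMorphisms D]
    (F : C ⥤ D) [F.PreservesZeroMorphisms] : Prop :=
  ∀ S : ShortComplex C, S.ShortExact → (S.map F).Exact

variable {R : Type u} [CommRing R]

lemma mul_smul_eq_zero_of_exact {S : ShortComplex (ModuleCat.{w} R)} (hS : S.Exact) {a b : R}
    (h₁ : ∀ x : S.X₁, a • x = 0) (h₃ : ∀ x : S.X₃, b • x = 0) (x : S.X₂) : (a * b) • x = 0 := by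
  obtain ⟨y, hy⟩ := (ShortComplex.moduleCat_exact_iff S).1 hS (b • x) (by rw [map_smul, h₃])
  rw [mul_smul, ← hy, ← map_smul, h₁, map_zero]

variable {F : ModuleCat.{v} R ⥤ ModuleCat.{w} R} [F.Additive] [F.Linear R]

lemma exists_smul_eq_of_quotSMulTop (hF : IsHalfExact F) {Y : ModuleCat.{v} R} {a r : R}
    (hr : IsSMulRegular Y r)
    (hquot : ∀ z : F.obj (ModuleCat.of R (QuotSMulTop r Y)), a • z = 0) (y : F.obj Y) :
    ∃ z : F.obj Y, r • z = a • y := by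
  have hexact := hF _ hr.smulShortComplex_shortExact
  obtain ⟨z, hz⟩ := (ShortComplex.moduleCat_exact_iff _).1 hexact (a • y)
    ((map_smul _ a y).trans (hquot _))
  have hmap : F.map (r • 𝟙 Y) = r • 𝟙 (F.obj Y) := by rw [F.map_smul, F.map_id]
  exact ⟨z, (congrArg (fun φ ↦ φ.hom z) hmap).symm.trans hz⟩

lemma smul_eq_zero_of_isSMulRegular [IsNoetherianRing R] [IsLocalRing R] (hF : IsHalfExact F)
    {Y : ModuleCat.{v} R} [Module.Finite R (F.obj Y)] {a r : R} (hmem : r ∈ maximalIdeal R)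
    (hr : IsSMulRegular Y r)
    (hquot : ∀ (k : ℕ) (z : F.obj (ModuleCat.of R (QuotSMulTop (r ^ k) Y))), a • z = 0)
    (y : F.obj Y) : a • y = 0 := by
  have hkrull : ⨅ k : ℕ, maximalIdeal R ^ k • (⊤ : Submodule R (F.obj Y)) = ⊥ :=
    Ideal.iInf_pow_smul_eq_bot_of_isLocalRing _ (Ideal.IsPrime.ne_top inferInstance)
  rw [← Submodule.mem_bot R, ← hkrull, Submodule.mem_iInf]
  intro k
  obtain ⟨z, hz⟩ := exists_smul_eq_of_quotSMulTop hF (hr.pow k) (hquot k) y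
  exact hz ▸ Submodule.smul_mem_smul (Ideal.pow_mem_pow hmem k) trivial

theorem sq_smul_eq_zero_of_supportDim_le_succ [IsNoetherianRing R] [IsLocalRing R]
    (hF : IsHalfExact F)
    (hfin : ∀ X : ModuleCat.{v} R, Module.Finite R X → Module.Finite R (F.obj X)) {a : R} {t : ℕ}
    (h : ∀ X : ModuleCat.{v} R, Module.Finite R X → supportDim R X ≤ t →
      ∀ x : F.obj X, a • x = 0)
    (X : ModuleCat.{v} R) [Module.Finite R X] (hX : supportDim R X ≤ t + 1) (x : F.obj X) :
    a ^ 2 • x = 0 := by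
  by_cases hmax : maximalIdeal R ∈ (annihilator R X).minimalPrimes
  · have hdim := (supportDim_nonpos_of_maximalIdeal_mem_minimalPrimes hmax).trans
      (Nat.cast_nonneg' t)
    rw [sq, mul_smul]
    exact h X ‹_› hdim _
  obtain ⟨r, hr, hmin⟩ := exists_mem_maximalIdeal_forall_notMem_minimalPrimes hmax
  have hkilled (Y : Type v) [AddCommGroup Y] [Module R Y] [Module.Finite R Y]
      (hsupp : support R Y ⊆ support R X) (k : ℕ) (hk : r ^ k ∈ annihilator R Y)
      (y : F.obj (ModuleCat.of R Y)) : a • y = 0 :=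
    h (.of R Y) ‹_› ((ENat.WithBot.add_le_add_one_right_iff).1
      ((supportDim_succ_le_of_pow_mem_annihilator hsupp hk hmin).trans hX)) y
  obtain ⟨N, hreg⟩ := exists_isSMulRegular_quotient_torsionBy_pow (X := X) r
  let L : Submodule R X := Submodule.torsionBy R X (r ^ N)
  have hL : ∀ y : F.obj (.of R L), a • y = 0 :=
    hkilled L (support_subset_of_injective L.subtype L.injective_subtype) N
      (mem_annihilator_torsionBy _)
  have hquot : ∀ y : F.obj (.of R (X ⧸ L)), a • y = 0 := by
    have := hfin (.of R (X ⧸ L)) inferInstance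
    refine smul_eq_zero_of_isSMulRegular hF hr hreg fun k ↦ hkilled _ ?_ k
      (mem_annihilator_quotSMulTop _)
    exact (support_subset_of_surjective _ (Submodule.mkQ_surjective _)).trans
      (support_subset_of_surjective _ L.mkQ_surjective)
  have hses := ModuleCat.shortComplex_shortExact
    (ModuleCat.shortComplexOfCompEqZero L.subtype L.mkQ
      (LinearMap.exact_subtype_mkQ L).linearMap_comp_eq_zero)
    (LinearMap.exact_subtype_mkQ L) L.injective_subtype L.mkQ_surjective
  rw [sq]
  exact mul_smul_eq_zero_of_exact (hF _ hses) hL hquot x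

end HalfExact

section Cone

open Limits HomologicalComplex

variable {C ι : Type*} [Category C] [Preadditive C] [HasBinaryBiproducts C] {c : ComplexShape ι}

/-- The cone of the identity of `K` is contractible. The contraction maps the unshifted
summand `K` identically onto the shifted one. -/
def homotopyCofiberIdHomotopyZero [DecidableRel c.Rel] (K : HomologicalComplex C c)
    (hc : ∀ j, ∃ i, c.Rel i j) : Homotopy (𝟙 (homotopyCofiber (𝟙 K))) 0 where
  hom i j :=
    if hij : c.Rel j i then
      homotopyCofiber.sndX (𝟙 K) i ≫ homotopyCofiber.inlX (𝟙 K) i j hij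
    else 0
  zero i j hij := dif_neg hij
  comm j := by
    obtain ⟨i, hij⟩ := hc j
    rw [prevD_eq _ hij, dif_pos hij, zero_f, add_zero]
    by_cases hj : c.Rel j (c.next j)
    · rw [dNext_eq _ hj, dif_pos hj]
      refine homotopyCofiber.ext_from_X (𝟙 K) _ _ hj ?_ ?_
      · simp [homotopyCofiber.d_sndX_assoc (𝟙 K) _ _ hj]
      · simp [homotopyCofiber.d_sndX_assoc (𝟙 K) _ _ hj, homotopyCofiber.inlX_d (𝟙 K) _ _ _ hij hj]
    · rw [dNext_eq_zero _ _ hj, zero_add]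
      refine homotopyCofiber.ext_from_X' (𝟙 K) _ hj ?_
      simp [homotopyCofiber.inlX_d' (𝟙 K) _ _ hij hj]

/-- Adding a contractible complex does not change the homotopy type. -/
def biprodHomotopyEquivLeft (K L : HomologicalComplex C c) (hL : Homotopy (𝟙 L) 0) :
    HomotopyEquiv (K ⊞ L) K where
  hom := biprod.fst
  inv := biprod.inl
  homotopyInvHomId := .ofEq biprod.inl_fst
  homotopyHomInvId :=
    have hsnd : Homotopy (biprod.snd ≫ 𝟙 L ≫ biprod.inr : K ⊞ L ⟶ K ⊞ L)
        (biprod.snd ≫ 0 ≫ biprod.inr) := (hL.compRight _).compLeft _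
    ((Homotopy.ofEq (by simp)).trans
      ((Homotopy.refl (biprod.fst ≫ biprod.inl)).add hsnd.symm)).trans (.ofEq (by simp))

lemma projective_homotopyCofiber_X [DecidableRel c.Rel] {K L : HomologicalComplex C c} (φ : K ⟶ L)
    [∀ i, Projective (K.X i)] [∀ i, Projective (L.X i)] (i : ι) :
    Projective ((homotopyCofiber φ).X i) := by
  by_cases hi : c.Rel i (c.next i)
  · exact Projective.of_iso (homotopyCofiber.XIsoBiprod φ _ _ hi).symm inferInstance
  · exact Projective.of_iso (homotopyCofiber.XIso φ i hi).symm inferInstance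

end Cone

section LinearFunctors

open HomologicalComplex

variable {C D : Type*} [Category C] [Abelian C] [Category D] [Abelian D]

instance single₀_linear (R : Type*) [Ring R] [Linear R C] :
    (ChainComplex.single₀ C).Linear R where
  map_smul f r := to_single_hom_ext <| by
    rw [smul_f_apply, ChainComplex.single₀_map_f_zero, ChainComplex.single₀_map_f_zero]
    rfl

instance homologyFunctor_linear {ι : Type*} (c : ComplexShape ι) (i : ι) (R : Type*) [Ring R]
    [Linear R C] : (homologyFunctor C c i).Linear R where
  map_smul φ r := ShortComplex.homologyMap_smul ((shortComplexFunctor C c i).map φ) r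

variable [HasProjectiveResolutions C] (F : C ⥤ D) [F.Additive] (n : ℕ)

instance leftDerived_additive : (F.leftDerived n).Additive where
  map_add {X Y} f g := by
    let P := projectiveResolution X
    let Q := projectiveResolution Y
    have hf := ProjectiveResolution.lift_commutes f P Q
    have hg := ProjectiveResolution.lift_commutes g P Q
    have hadd : (ProjectiveResolution.lift f P Q + ProjectiveResolution.lift g P Q) ≫ Q.π =
        P.π ≫ (ChainComplex.single₀ C).map (f + g) := by
      rw [Preadditive.add_comp, hf, hg, Functor.map_add, Preadditive.comp_add]
    rw [F.leftDerived_map_eq n f _ hf, F.leftDerived_map_eq n g _ hg,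
      F.leftDerived_map_eq n (f + g) _ hadd, Functor.map_add, Preadditive.add_comp,
      Preadditive.comp_add]

instance leftDerived_linear (R : Type*) [Ring R] [Linear R C] [Linear R D] [F.Linear R] :
    (F.leftDerived n).Linear R where
  map_smul {X Y} f r := by
    let P := projectiveResolution X
    let Q := projectiveResolution Y
    have hf := ProjectiveResolution.lift_commutes f P Q
    have hsmul : (r • ProjectiveResolution.lift f P Q) ≫ Q.π =
        P.π ≫ (ChainComplex.single₀ C).map (r • f) := by
      rw [Linear.smul_comp, hf, Functor.map_smul, Linear.comp_smul]
    rw [F.leftDerived_map_eq n f _ hf, F.leftDerived_map_eq n (r • f) _ hsmul, Functor.map_smul,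
      Linear.smul_comp, Linear.comp_smul]

end LinearFunctors

section Horseshoe

open Limits HomologicalComplex

variable {C : Type*} [Category C] [Abelian C]

/-- The projective resolution obtained from `P` by adding a contractible complex of projectives. -/
def biprodResolution {X : C} (P : ProjectiveResolution X) (K : ChainComplex C ℕ)
    [∀ n, Projective (K.X n)] (hK : Homotopy (𝟙 K) 0) : ProjectiveResolution X where
  complex := P.complex ⊞ K
  projective n := Projective.of_iso (biprodXIso _ _ n).symm inferInstance
  π := biprod.fst ≫ P.π
  quasiIso :=
    have : QuasiIso (biprod.fst : P.complex ⊞ K ⟶ P.complex) :=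
      (biprodHomotopyEquivLeft P.complex K hK).quasiIso_hom
    quasiIso_comp _ _

/-- A resolution of a short complex `S`: projective resolutions of its three terms, fitting into a
degreewise split short exact sequence of complexes that lifts `S`. -/
structure SplitResolution (S : ShortComplex C) where
  res₁ : ProjectiveResolution S.X₁
  res₂ : ProjectiveResolution S.X₂
  res₃ : ProjectiveResolution S.X₃
  f : res₁.complex ⟶ res₂.complex
  g : res₂.complex ⟶ res₃.complex
  zero : f ≫ g = 0
  splitting (n : ℕ) : ((ShortComplex.mk f g zero).map (eval C _ n)).Splitting
  comm_f : f ≫ res₂.π = res₁.π ≫ (ChainComplex.single₀ C).map S.f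
  comm_g : g ≫ res₃.π = res₂.π ≫ (ChainComplex.single₀ C).map S.g

namespace SplitResolution

variable {S : ShortComplex C}

lemma nonempty_of_retraction (hS : S.ShortExact) {P₁ : ProjectiveResolution S.X₁}
    {P₂ : ProjectiveResolution S.X₂} (f : P₁.complex ⟶ P₂.complex)
    (comm : f ≫ P₂.π = P₁.π ≫ (ChainComplex.single₀ C).map S.f)
    (r : ∀ n, P₂.complex.X n ⟶ P₁.complex.X n) (hr : ∀ n, f.f n ≫ r n = 𝟙 _) :
    Nonempty (SplitResolution S) := by
  have : Mono f := mono_of_mono_f f fun n ↦ (SplitMono.mk (r n) (hr n)).mono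
  let T := ShortComplex.mk f (cokernel.π f) (cokernel.condition f)
  have hT : T.ShortExact := { exact := ShortComplex.exact_cokernel f }
  let splitting (n : ℕ) : (T.map (eval C _ n)).Splitting :=
    have hn := hT.map_of_exact (eval C _ n)
    .ofExactOfRetraction _ hn.exact (r n) (hr n) hn.epi_g
  let π₃ : cokernel f ⟶ (ChainComplex.single₀ C).obj S.X₃ :=
    cokernel.desc f (P₂.π ≫ (ChainComplex.single₀ C).map S.g) (by
      rw [reassoc_of% comm, ← Functor.map_comp, S.zero, Functor.map_zero, comp_zero])
  have hπ₃ : cokernel.π f ≫ π₃ = P₂.π ≫ (ChainComplex.single₀ C).map S.g := cokernel.π_desc _ _ _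
  have hquasi : QuasiIso π₃ :=
    HomologySequence.quasiIso_τ₃
      (⟨P₁.π, P₂.π, π₃, comm.symm, hπ₃.symm⟩ : T ⟶ S.map (ChainComplex.single₀ C)) hT
      (hS.map_of_exact (single C (ComplexShape.down ℕ) 0)) P₁.quasiIso P₂.quasiIso
  exact ⟨{
    res₁ := P₁
    res₂ := P₂
    res₃ :=
      { complex := cokernel f
        projective := fun n ↦
          Retract.projective (p := P₂.projective n) ⟨(splitting n).s, _, (splitting n).s_g⟩
        π := π₃ }
    f := f
    g := cokernel.π f
    zero := cokernel.condition f
    splitting := splitting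
    comm_f := comm
    comm_g := hπ₃ }⟩

lemma nonempty_of_shortExact [HasProjectiveResolutions C] (hS : S.ShortExact) :
    Nonempty (SplitResolution S) := by
  let P₁ := projectiveResolution S.X₁
  let P₂ := projectiveResolution S.X₂
  let lift := ProjectiveResolution.lift S.f P₁ P₂
  let cone := homotopyCofiber (𝟙 P₁.complex)
  have : ∀ n, Projective (cone.X n) := projective_homotopyCofiber_X _
  let Q₂ := biprodResolution P₂ cone
    (homotopyCofiberIdHomotopyZero _ fun n ↦ ⟨n + 1, rfl⟩)
  let f : P₁.complex ⟶ P₂.complex ⊞ cone := biprod.lift lift (homotopyCofiber.inr (𝟙 P₁.complex))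
  let r (n : ℕ) : (P₂.complex ⊞ cone).X n ⟶ P₁.complex.X n :=
    (biprod.snd : P₂.complex ⊞ cone ⟶ cone).f n ≫ homotopyCofiber.sndX (𝟙 P₁.complex) n
  have hr (n : ℕ) : f.f n ≫ r n = 𝟙 _ := by
    rw [← comp_f_assoc, biprod.lift_snd]
    exact homotopyCofiber.inrX_sndX _ n
  exact nonempty_of_retraction hS (P₂ := Q₂) f
    ((biprod.lift_fst_assoc _ _ _).trans (ProjectiveResolution.lift_commutes _ _ _)) r hr

variable {D : Type*} [Category D] [Abelian D] (T : SplitResolution S) (F : C ⥤ D) [F.Additive]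

/-- The image under `F` of the sequence of resolutions `res₁ ⟶ res₂ ⟶ res₃`. -/
def mappedComplex : ShortComplex (ChainComplex D ℕ) :=
  (ShortComplex.mk T.f T.g T.zero).map (F.mapHomologicalComplex (ComplexShape.down ℕ))

lemma mappedComplex_shortExact : (T.mappedComplex F).ShortExact :=
  shortExact_of_degreewise_shortExact _ fun n ↦ ((T.splitting n).map F).shortExact

/-- The left derived functors of `F` on `S`, computed as the homology of `T.mappedComplex F`. -/
def mapLeftDerivedIso [HasProjectiveResolutions C] (n : ℕ) :
    S.map (F.leftDerived n) ≅ (T.mappedComplex F).map (homologyFunctor D _ n) :=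
  ShortComplex.isoMk (T.res₁.isoLeftDerivedObj F n) (T.res₂.isoLeftDerivedObj F n)
    (T.res₃.isoLeftDerivedObj F n)
    (ProjectiveResolution.isoLeftDerivedObj_hom_naturality S.f T.res₁ T.res₂ T.f
      (by simpa using congr_hom T.comm_f 0) F n).symm
    (ProjectiveResolution.isoLeftDerivedObj_hom_naturality S.g T.res₂ T.res₃ T.g
      (by simpa using congr_hom T.comm_g 0) F n).symm

end SplitResolution

end Horseshoe

section LongExactSequence

open Limits HomologicalComplex

variable {C D : Type*} [Category C] [Abelian C] [HasProjectiveResolutions C] [Category D]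
  [Abelian D] (F : C ⥤ D) [F.Additive] (n : ℕ)

theorem isHalfExact_leftDerived : IsHalfExact (F.leftDerived n) := by
  intro S hS
  obtain ⟨T⟩ := SplitResolution.nonempty_of_shortExact hS
  exact ShortComplex.exact_of_iso (T.mapLeftDerivedIso F n).symm
    ((T.mappedComplex_shortExact F).homology_exact₂ n)

lemma exists_leftDerived_connecting_exact {S : ShortComplex C} (hS : S.ShortExact) :
    ∃ (δ : (F.leftDerived (n + 1)).obj S.X₃ ⟶ (F.leftDerived n).obj S.X₁)
      (w : (F.leftDerived (n + 1)).map S.g ≫ δ = 0), (ShortComplex.mk _ δ w).Exact := by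
  obtain ⟨T⟩ := SplitResolution.nonempty_of_shortExact hS
  have hT := T.mappedComplex_shortExact F
  have hrel : (ComplexShape.down ℕ).Rel (n + 1) n := rfl
  let e₁ : (F.leftDerived n).obj S.X₁ ≅ (T.mappedComplex F).X₁.homology n :=
    ShortComplex.π₁.mapIso (T.mapLeftDerivedIso F n)
  let e₂ : (F.leftDerived (n + 1)).obj S.X₂ ≅ (T.mappedComplex F).X₂.homology (n + 1) :=
    ShortComplex.π₂.mapIso (T.mapLeftDerivedIso F (n + 1))
  let e₃ : (F.leftDerived (n + 1)).obj S.X₃ ≅ (T.mappedComplex F).X₃.homology (n + 1) :=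
    ShortComplex.π₃.mapIso (T.mapLeftDerivedIso F (n + 1))
  have comm : e₂.hom ≫ homologyMap (T.mappedComplex F).g (n + 1) =
      (F.leftDerived (n + 1)).map S.g ≫ e₃.hom :=
    (T.mapLeftDerivedIso F (n + 1)).hom.comm₂₃
  refine ⟨e₃.hom ≫ hT.δ (n + 1) n hrel ≫ e₁.inv, ?_, ?_⟩
  · rw [← Category.assoc, ← comm, Category.assoc, hT.comp_δ_assoc, zero_comp, comp_zero]
  · exact ShortComplex.exact_of_iso (ShortComplex.isoMk e₂ e₃ e₁ comm (by simp)).symm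
      (hT.homology_exact₃ (n + 1) n hrel)

end LongExactSequence

section Finite

open Limits

universe u v w

theorem finite_leftDerived_obj {R : Type u} {S : Type v} [CommRing R] [IsNoetherianRing R]
    [CommRing S] [IsNoetherianRing S] (F : ModuleCat.{u} R ⥤ ModuleCat.{w} S) [F.Additive]
    [PreservesFiniteColimits F]
    (hF : ∀ X : ModuleCat.{u} R, Module.Finite R X → Module.Finite S (F.obj X)) (n : ℕ)
    (X : ModuleCat.{u} R) [hX : Module.Finite R X] :
    Module.Finite S ((F.leftDerived n).obj X) := by
  induction n generalizing X with
  | zero =>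
    have := hF X hX
    exact .equiv (F.leftDerivedZeroIsoSelf.app X).toLinearEquiv.symm
  | succ n ih =>
    obtain ⟨k, f, hf⟩ := Module.Finite.exists_fin' R X
    obtain ⟨δ, _, hδ⟩ :=
      exists_leftDerived_connecting_exact F n (LinearMap.shortExact_shortComplexKer hf)
    have : Projective (ModuleCat.of R (Fin k → R)) :=
      (IsProjective.iff_projective (Fin k → R)).1 inferInstance
    have hzero := F.isZero_leftDerived_obj_projective_succ n (ModuleCat.of R (Fin k → R))
    have hinj := (ModuleCat.mono_iff_injective δ).1 (hδ.mono_g (hzero.eq_of_src _ _))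
    have := ih (ModuleCat.of R (LinearMap.ker f))
    exact .of_injective δ.hom hinj

end Finite

section Tor

open Limits

theorem sq_smul_torMod_eq_zero {R : Type} [CommRing R] [IsNoetherianRing R] [IsLocalRing R]
    (M : ModuleCat.{0} R) [Module.Finite R M] {a : R} {n t : ℕ}
    (h : ∀ X : ModuleCat.{0} R, Module.Finite R X → Module.supportDim R X ≤ t →
      ∀ x : TorMod R n M X, a • x = 0)
    (X : ModuleCat.{0} R) [Module.Finite R X] (hX : Module.supportDim R X ≤ t + 1)
    (x : TorMod R n M X) : a ^ 2 • x = 0 := by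
  let F := (MonoidalCategory.tensoringLeft (ModuleCat.{0} R)).obj M
  have : F.Linear R := inferInstanceAs ((MonoidalCategory.tensorLeft M).Linear R)
  have : PreservesFiniteColimits F :=
    inferInstanceAs (PreservesFiniteColimits (MonoidalCategory.tensorLeft M))
  have hfin (X : ModuleCat.{0} R) (_ : Module.Finite R X) : Module.Finite R (F.obj X) :=
    inferInstanceAs (Module.Finite R (TensorProduct R M X))
  exact sq_smul_eq_zero_of_supportDim_le_succ (isHalfExact_leftDerived F n)
    (fun X _ ↦ finite_leftDerived_obj F hfin n X) h X hX x

end Tor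

theorem stmt0_general (R : Type) [CommRing R] [IsNoetherianRing R] [IsLocalRing R]
    (M : ModuleCat.{0} R) (hM : Module.Finite R M) (a : R) (n : ℤ) (t : ℕ)
    (h : ∀ X : ModuleCat.{0} R, Module.Finite R X →
        ringKrullDim (R ⧸ Module.annihilator R X) ≤ (t : WithBot ℕ∞) →
        ∀ x : TorZ R n M X, a • x = 0) :
    ∀ X : ModuleCat.{0} R, Module.Finite R X →
      ringKrullDim (R ⧸ Module.annihilator R X) ≤ ((t + 1 : ℕ) : WithBot ℕ∞) →
      ∀ x : TorZ R n M X, (a ^ 2) • x = 0 := by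
  intro X hX hdim
  obtain hn | hn := le_or_gt 0 n
  · have htor (Y : ModuleCat.{0} R) : TorZ R n M Y = TorMod R n.toNat M Y := if_pos hn
    have hkilled (Y : ModuleCat.{0} R) (hY : Module.Finite R Y)
        (hYdim : Module.supportDim R Y ≤ t) : ∀ y : TorMod R n.toNat M Y, a • y = 0 :=
      htor Y ▸ h Y hY (Module.supportDim_eq_ringKrullDim_quotient_annihilator R Y ▸ hYdim)
    rw [htor]
    rw [← Module.supportDim_eq_ringKrullDim_quotient_annihilator] at hdim
    exact sq_smul_torMod_eq_zero M hkilled X hdim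
  · have htor : TorZ R n M X = ModuleCat.of R PUnit := if_neg hn.not_ge
    rw [htor]
    exact fun x ↦ Subsingleton.elim (α := PUnit) _ _

/-- Let `R` be a commutative noetherian local ring, `M` a finitely generated
`R`-module, `a ∈ R`, `n` an integer and `t` a nonnegative integer. If `a · Tor_n(M,X) = 0` and
`a · Tor_{n-1}(M,X) = 0` for every finitely generated `R`-module `X` of dimension at most `t`,
then `a² · Tor_n(M,X) = 0` for every finitely generated `R`-module `X` of dimension at most
`t + 1`. -/
theorem stmt0 (R : Type) [CommRing R] [IsNoetherianRing R] [IsLocalRing R]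
    (M : ModuleCat.{0} R) (hM : Module.Finite R M) (a : R) (n : ℤ) (t : ℕ)
    (h : ∀ X : ModuleCat.{0} R, Module.Finite R X →
        ringKrullDim (R ⧸ Module.annihilator R X) ≤ (t : WithBot ℕ∞) →
        (∀ x : TorZ R n M X, a • x = 0) ∧ (∀ x : TorZ R (n - 1) M X, a • x = 0)) :
    ∀ X : ModuleCat.{0} R, Module.Finite R X →
      ringKrullDim (R ⧸ Module.annihilator R X) ≤ ((t + 1 : ℕ) : WithBot ℕ∞) →
      ∀ x : TorZ R n M X, (a ^ 2) • x = 0 :=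
  stmt0_general R M hM a n t fun X hX hdim ↦ (h X hX hdim).1

end
end

section
/- Let R be a commutative noetherian local ring, M a finitely generated R-module, a an element of R, n an integer and t a nonnegative integer. Suppose that a·Ext_R^n(M,X) = 0 and a·Ext_R^{n+1}(M,X) = 0 for every finitely generated R-module X whose dimension is at most t. Then a²·Ext_R^n(M,X) = 0 for every finitely generated R-module X whose dimension is at most t+1. -/
open CategoryTheory IsLocalRing

noncomputable section

/-!
For `r ∈ R`, splitting multiplication by `r` on `X` as `X ↠ rX ↪ X` and running the two long exact
sequences shows that `a` killing `Ext^n(M, X/rX)` and `b` killing `Ext^(n+1)(M, (0 :_X r))` force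
`ab Ext^n(M, X) ⊆ r Ext^n(M, X)`. Given a maximal ideal `m`, prime avoidance yields `x ∈ m` outside
every non-maximal minimal prime of `X`, and then `X/x^k X` and `(0 :_X x^k)` have dimension at most
`t` for all `k`. Hence `ab Ext^n(M, X) ⊆ ⋂ x^k Ext^n(M, X)`, so by Krull's intersection theorem each
element of `ab Ext^n(M, X)` is killed by some element of `1 + m`. As `m` was arbitrary, it vanishes.
-/

section NoetherianRing

variable {R : Type*} [CommRing R]

lemma eq_zero_of_forall_isMaximal_exists_eq_pow_smul [IsNoetherianRing R] {E : Type*}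
    [AddCommGroup E] [Module R E] [Module.Finite R E] {e : E}
    (h : ∀ m : Ideal R, m.IsMaximal → ∃ x ∈ m, ∀ k : ℕ, ∃ y : E, e = x ^ k • y) : e = 0 := by
  rw [← Ideal.torsionOf_eq_top_iff (R := R)]
  by_contra torsion_ne_top
  obtain ⟨m, m_max, torsion_le⟩ := Ideal.exists_le_maximal _ torsion_ne_top
  obtain ⟨x, x_mem, e_eq⟩ := h m m_max
  have e_mem_iInf : e ∈ (⨅ k : ℕ, Ideal.span {x} ^ k • ⊤ : Submodule R E) := by
    refine (Submodule.mem_iInf _).mpr fun k ↦ ?_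
    obtain ⟨y, rfl⟩ := e_eq k
    exact Submodule.smul_mem_smul
      (Ideal.pow_mem_pow (Ideal.mem_span_singleton_self x) k) Submodule.mem_top
  obtain ⟨⟨s, s_mem⟩, hs⟩ := (Ideal.mem_iInf_smul_pow_eq_bot_iff _ e).mp e_mem_iInf
  have one_sub_mem : 1 - s ∈ m := torsion_le (by simp_all [Ideal.mem_torsionOf_iff, sub_smul])
  have s_mem_m : s ∈ m := (Ideal.span_singleton_le_iff_mem m).mpr x_mem s_mem
  exact m_max.ne_top ((Ideal.eq_top_iff_one m).mpr (by simpa using m.add_mem one_sub_mem s_mem_m))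

lemma exists_mem_forall_notMem_minimalPrimes [IsNoetherianRing R] (I : Ideal R) {m : Ideal R}
    (hm : m.IsMaximal) : ∃ x ∈ m, ∀ p ∈ I.minimalPrimes, ¬ p.IsMaximal → x ∉ p := by
  by_contra! covered
  have finite_primes : {p ∈ I.minimalPrimes | ¬ p.IsMaximal}.Finite :=
    (I.finite_minimalPrimes_of_isNoetherianRing R).subset (Set.sep_subset _ _)
  have m_subset : (m : Set R) ⊆ ⋃ p ∈ {p ∈ I.minimalPrimes | ¬ p.IsMaximal}, (p : Set R) :=
    fun x hx ↦ by
      obtain ⟨p, p_min, p_not_max, x_mem⟩ := covered x hx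
      exact Set.mem_iUnion₂.mpr ⟨p, ⟨p_min, p_not_max⟩, x_mem⟩
  obtain ⟨p, ⟨p_min, p_not_max⟩, m_le⟩ := (m.subset_union_prime_finite finite_primes (f := id)
    0 0 fun _ hp _ _ ↦ hp.1.isPrime).mp m_subset
  exact p_not_max (hm.eq_of_le p_min.isPrime.ne_top m_le ▸ hm)

variable {X : Type*} [AddCommGroup X] [Module R X] [Module.Finite R X] {x : R}

lemma exists_mem_support_lt_of_mem
    (hx : ∀ p ∈ (Module.annihilator R X).minimalPrimes, ¬ p.IsMaximal → x ∉ p)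
    {p : PrimeSpectrum R} (hp : p ∈ Module.support R X) (p_not_max : ¬ p.asIdeal.IsMaximal)
    (x_mem : x ∈ p.asIdeal) : ∃ q ∈ Module.support R X, q < p := by
  obtain ⟨q, q_min, q_le⟩ := Ideal.exists_minimalPrimes_le (Module.mem_support_iff_of_finite.mp hp)
  refine ⟨⟨q, q_min.isPrime⟩, Module.mem_support_iff_of_finite.mpr q_min.1.2,
    lt_of_le_of_ne q_le ?_⟩
  rintro rfl
  exact hx q q_min p_not_max x_mem

lemma supportDim_le_of_support_subset_of_mem_annihilator {N : Type*} [AddCommGroup N] [Module R N]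
    {t : ℕ} (hx : ∀ p ∈ (Module.annihilator R X).minimalPrimes, ¬ p.IsMaximal → x ∉ p)
    (hX : Module.supportDim R X ≤ (t + 1 : ℕ))
    (hN : Module.support R N ⊆ Module.support R X) (hxN : x ∈ Module.annihilator R N) :
    Module.supportDim R N ≤ t := by
  refine iSup_le fun c ↦ ?_
  obtain c_length | c_length := Nat.eq_zero_or_pos c.length
  · simp [c_length]
  have head_not_max : ¬ c.head.1.asIdeal.IsMaximal := fun head_max ↦ by
    have head_lt_last : c.head.1.asIdeal < c.last.1.asIdeal :=
      c.strictMono (Fin.lt_def.mpr c_length)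
    exact head_lt_last.ne (head_max.eq_of_le c.last.1.isPrime.ne_top head_lt_last.le)
  obtain ⟨q, q_mem, q_lt⟩ := exists_mem_support_lt_of_mem hx (hN c.head.2) head_not_max
    (Module.annihilator_le_of_mem_support c.head.2 hxN)
  let c' : LTSeries (Module.support R X) := c.map (Set.inclusion hN) fun _ _ h ↦ h
  have length_cons : (c'.cons ⟨q, q_mem⟩ q_lt).length = c.length + 1 := RelSeries.cons_length ..
  have length_cons_le := (Order.LTSeries.length_le_krullDim (c'.cons ⟨q, q_mem⟩ q_lt)).trans hX
  rw [length_cons, Nat.cast_le] at length_cons_le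
  exact Nat.cast_le.mpr (Nat.le_of_succ_le_succ length_cons_le)

end NoetherianRing

section AbelianCategory

open Limits

variable {C : Type*} [Category* C] [Abelian C] {X Y : C} (f : X ⟶ Y)

lemma shortExact_kernel_image :
    (ShortComplex.mk (kernel.ι f) (factorThruImage f)
      (by simp [← cancel_mono (image.ι f)])).ShortExact where
  exact := ShortComplex.exact_of_f_is_kernel _
    (isKernelOfComp _ _ (kernelIsKernel f) _ (image.fac f))

lemma shortExact_image_cokernel :
    (ShortComplex.mk (image.ι f) (cokernel.π f)
      (by simp [← cancel_epi (factorThruImage f)])).ShortExact where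
  exact := ShortComplex.exact_of_g_is_cokernel _
    (isCokernelOfComp _ _ (cokernelIsCokernel f) _ (image.fac f))

lemma exists_comp_mk₀_eq_mul_smul [HasExt C] {R : Type*} [CommRing R] [Linear R C]
    {M : C} {n : ℕ} {a b : R} (ha : ∀ e : Abelian.Ext M (cokernel f) n, a • e = 0)
    (hb : ∀ e : Abelian.Ext M (kernel f) (n + 1), b • e = 0) (e : Abelian.Ext M Y n) :
    ∃ v : Abelian.Ext M X n, v.comp (.mk₀ f) (add_zero n) = (a * b) • e := by
  obtain ⟨u, hu⟩ := Abelian.Ext.covariant_sequence_exact₂ M (shortExact_image_cokernel f) (a • e)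
    (by rw [Abelian.Ext.smul_comp, ha])
  obtain ⟨v, hv⟩ := Abelian.Ext.covariant_sequence_exact₃ M (shortExact_kernel_image f) (b • u)
    rfl (by rw [Abelian.Ext.smul_comp, hb])
  refine ⟨v, ?_⟩
  calc v.comp (.mk₀ f) (add_zero n)
      = (v.comp (.mk₀ (factorThruImage f)) (add_zero n)).comp (.mk₀ (image.ι f)) (add_zero n) := by
        simp only [Abelian.Ext.comp_assoc_of_third_deg_zero, Abelian.Ext.mk₀_comp_mk₀, image.fac]
    _ = b • u.comp (.mk₀ (image.ι f)) (add_zero n) := by rw [hv, Abelian.Ext.smul_comp]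
    _ = (a * b) • e := by rw [hu, mul_comm, mul_smul]

end AbelianCategory

section ModuleCategory

open Limits

universe u v

variable {R : Type u} [CommRing R]

lemma mem_annihilator_kernel_smul_id (X : ModuleCat.{v} R) (r : R) :
    r ∈ Module.annihilator R (kernel (r • 𝟙 X) : ModuleCat R) := by
  refine Module.mem_annihilator.mpr fun y ↦ ?_
  have smul_ι : r • kernel.ι (r • 𝟙 X) = 0 := by
    rw [← kernel.condition (r • 𝟙 X), Linear.comp_smul, Category.comp_id]
  refine (ModuleCat.mono_iff_injective (kernel.ι (r • 𝟙 X))).mp inferInstance ?_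
  rw [map_smul, map_zero]
  exact ConcreteCategory.congr_hom smul_ι y

lemma mem_annihilator_cokernel_smul_id (X : ModuleCat.{v} R) (r : R) :
    r ∈ Module.annihilator R (cokernel (r • 𝟙 X) : ModuleCat R) := by
  refine Module.mem_annihilator.mpr fun y ↦ ?_
  have smul_π : r • cokernel.π (r • 𝟙 X) = 0 := by
    rw [← cokernel.condition (r • 𝟙 X), Linear.smul_comp, Category.id_comp]
  obtain ⟨z, rfl⟩ := (ModuleCat.epi_iff_surjective (cokernel.π (r • 𝟙 X))).mp inferInstance y
  exact ConcreteCategory.congr_hom smul_π z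

theorem mul_smul_ext_eq_zero_of_supportDim_le_succ [Small.{v} R] [IsNoetherianRing R]
    {M : ModuleCat.{v} R} [Module.Finite R M] {a b : R} {n t : ℕ}
    (h : ∀ X : ModuleCat.{v} R, Module.Finite R X → Module.supportDim R X ≤ t →
      (∀ e : Abelian.Ext M X n, a • e = 0) ∧ (∀ e : Abelian.Ext M X (n + 1), b • e = 0))
    {X : ModuleCat.{v} R} [Module.Finite R X] (hX : Module.supportDim R X ≤ (t + 1 : ℕ))
    (e : Abelian.Ext M X n) : (a * b) • e = 0 := by
  refine eq_zero_of_forall_isMaximal_exists_eq_pow_smul (R := R) fun m m_max ↦ ?_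
  obtain ⟨x, x_mem, x_notMem⟩ :=
    exists_mem_forall_notMem_minimalPrimes (Module.annihilator R X) m_max
  refine ⟨x, x_mem, fun k ↦ ?_⟩
  have pow_notMem : ∀ p ∈ (Module.annihilator R X).minimalPrimes, ¬ p.IsMaximal → x ^ k ∉ p :=
    fun p p_min p_not_max h ↦ x_notMem p p_min p_not_max (p_min.isPrime.mem_of_pow_mem k h)
  let f : X ⟶ X := x ^ k • 𝟙 X
  have ι_injective : Function.Injective (kernel.ι f).hom :=
    (ModuleCat.mono_iff_injective _).mp inferInstance
  have π_surjective : Function.Surjective (cokernel.π f).hom :=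
    (ModuleCat.epi_iff_surjective _).mp inferInstance
  have kernel_dim : Module.supportDim R (kernel f : ModuleCat R) ≤ t :=
    supportDim_le_of_support_subset_of_mem_annihilator pow_notMem hX
      (Module.support_subset_of_injective _ ι_injective) (mem_annihilator_kernel_smul_id X _)
  have cokernel_dim : Module.supportDim R (cokernel f : ModuleCat R) ≤ t :=
    supportDim_le_of_support_subset_of_mem_annihilator pow_notMem hX
      (Module.support_subset_of_surjective _ π_surjective) (mem_annihilator_cokernel_smul_id X _)
  obtain ⟨v, hv⟩ := exists_comp_mk₀_eq_mul_smul f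
    (h _ (.of_surjective _ π_surjective) cokernel_dim).1
    (h _ (.of_injective _ ι_injective) kernel_dim).2 e
  exact ⟨v, by rw [← hv, Abelian.Ext.smul_eq_comp_mk₀]⟩

end ModuleCategory

section ExtComparison

open Limits Opposite

variable {C : Type*} [Category* C] [Abelian C] {X : C} (P : ProjectiveResolution X) (Y : C)

variable {Y} in
lemma extMk_degree_zero_eq_zero_iff [HasExt C] (f : P.complex.X 0 ⟶ Y)
    (hf : P.complex.d 1 0 ≫ f = 0) : P.extMk f 1 rfl hf = 0 ↔ f = 0 := by
  refine ⟨fun h ↦ ?_, fun h ↦ by simp [h]⟩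
  rw [← P.extEquivCohomologyClass.apply_eq_iff_eq, P.extEquivCohomologyClass_extMk,
    P.extEquivCohomologyClass_zero, CochainComplex.HomComplex.CohomologyClass.mk_eq_zero_iff,
    CochainComplex.HomComplex.Cocycle.toSingleMk_mem_coboundaries_iff _ _ _ _ _ 1 (by simp)] at h
  obtain ⟨g, hg⟩ := h
  have g_eq_zero : g = 0 := (P.cochainComplex.isZero_of_isStrictlyLE 0 1).eq_of_src _ _
  rw [g_eq_zero, comp_zero] at hg
  rw [← cancel_epi (P.cochainComplexXIso (-(0 : ℕ)) 0 rfl).hom, comp_zero]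
  exact hg.symm

variable {Y} in
-- For `n = 0` the truncated index gives `d 0 0 = 0`, so the right-hand side reads `f = 0`.
lemma extMk_eq_zero_iff_exists_d_comp_eq [HasExt C] {n : ℕ} (f : P.complex.X n ⟶ Y)
    (hf : P.complex.d (n + 1) n ≫ f = 0) : P.extMk f (n + 1) rfl hf = 0 ↔
      ∃ g : P.complex.X (n - 1) ⟶ Y, P.complex.d n (n - 1) ≫ g = f := by
  cases n with
  | zero => rw [extMk_degree_zero_eq_zero_iff]; simp [eq_comm]
  | succ p => exact P.extMk_eq_zero_iff f _ rfl hf p rfl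

variable {R : Type*} [CommRing R] [Linear R C]

variable {Y} in
lemma extMk_smul [HasExt C] {n : ℕ} (r : R) (f : P.complex.X n ⟶ Y)
    (hf : P.complex.d (n + 1) n ≫ f = 0) :
    P.extMk (r • f) (n + 1) rfl (by simp [hf]) = r • P.extMk f (n + 1) rfl hf := by
  simp [Abelian.Ext.smul_eq_comp_mk₀, P.extMk_comp_mk₀]

variable (R) in
/-- The complex `Hom(Pₙ₋₁, Y) ⟶ Hom(Pₙ, Y) ⟶ Hom(Pₙ₊₁, Y)` of `R`-modules, whose homology is
`Ext^n(X, Y)`. For `n = 0` its first map is the zero map out of `Hom(P₀, Y)`. -/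
abbrev homShortComplex (n : ℕ) : ShortComplex (ModuleCat R) :=
  (P.complex.linearYonedaObj R Y).sc' (n - 1) n (n + 1)

variable (n : ℕ)

variable (R) in
/-- The map sending an `n`-cocycle of `Hom(P, Y)` to its class in `Ext^n(X, Y)`, as an
`R`-linear map. -/
def extMkLinearMap [HasExt C] :
    LinearMap.ker (homShortComplex P Y R n).g.hom →ₗ[R] Abelian.Ext X Y n where
  toFun f := P.extMk f.1 (n + 1) rfl f.2
  map_add' f g := (P.add_extMk f.1 g.1 _ rfl f.2 g.2).symm
  map_smul' r f := extMk_smul P r f.1 f.2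

lemma extMkLinearMap_surjective [HasExt C] :
    Function.Surjective (extMkLinearMap P Y R n) := fun e ↦ by
  obtain ⟨f, hf, rfl⟩ := P.extMk_surjective e (n + 1) rfl
  exact ⟨⟨f, hf⟩, rfl⟩

lemma ker_extMkLinearMap [HasExt C] : LinearMap.ker (extMkLinearMap P Y R n) =
    LinearMap.range (homShortComplex P Y R n).moduleCatToCycles := by
  ext f
  exact (extMk_eq_zero_iff_exists_d_comp_eq P f.1 f.2).trans
    ⟨fun ⟨g, hg⟩ ↦ ⟨g, Subtype.ext hg⟩, fun ⟨g, hg⟩ ↦ ⟨g, congrArg Subtype.val hg⟩⟩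

variable (R X) in
/-- The comparison between Mathlib's two constructions of `Ext^n(X, Y)`: the derived functors
`Ext R C n` of `Hom(-, Y)`, and the morphisms `Abelian.Ext X Y n` in the derived category. -/
def extLinearEquivAbelianExt [HasExt C] [EnoughProjectives C] :
    ((Ext R C n).obj (op X)).obj Y ≃ₗ[R] Abelian.Ext X Y n :=
  let P := projectiveResolution X
  (P.isoExt n Y ≪≫ (P.complex.linearYonedaObj R Y).homologyIsoSc' (n - 1) n (n + 1)
      (by cases n <;> simp) (by simp) ≪≫
    (homShortComplex P Y R n).moduleCatHomologyIso).toLinearEquiv ≪≫ₗ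
  Submodule.quotEquivOfEq _ _ (ker_extMkLinearMap P Y n).symm ≪≫ₗ
  (extMkLinearMap P Y R n).quotKerEquivOfSurjective (extMkLinearMap_surjective P Y n)

end ExtComparison

section IntegerIndexedExt

variable {R : Type} [CommRing R] (M X : ModuleCat.{0} R)

lemma forall_smul_extZ_eq_zero_iff (a : R) {i : ℤ} {n : ℕ} (hi : i = n) :
    (∀ x : ExtZ R i M X, a • x = 0) ↔ ∀ e : Abelian.Ext M X n, a • e = 0 := by
  have extZ_eq : ExtZ R i M X = ExtMod R n M X := by simp [ExtZ, hi]
  rw [extZ_eq, ← Module.mem_annihilator, ← Module.mem_annihilator]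
  exact (extLinearEquivAbelianExt M X R n).annihilator_eq ▸ Iff.rfl

lemma subsingleton_extZ_of_neg {i : ℤ} (hi : i < 0) : Subsingleton (ExtZ R i M X) := by
  rw [ExtZ, if_neg hi.not_ge]
  exact inferInstanceAs (Subsingleton PUnit)

end IntegerIndexedExt

theorem stmt1_general (R : Type) [CommRing R] [IsNoetherianRing R]
    (M : ModuleCat.{0} R) (hM : Module.Finite R M) (a b : R) (n : ℤ) (t : ℕ)
    (h : ∀ X : ModuleCat.{0} R, Module.Finite R X →
        ringKrullDim (R ⧸ Module.annihilator R X) ≤ (t : WithBot ℕ∞) →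
        (∀ x : ExtZ R n M X, a • x = 0) ∧ (∀ x : ExtZ R (n + 1) M X, b • x = 0)) :
    ∀ X : ModuleCat.{0} R, Module.Finite R X →
      ringKrullDim (R ⧸ Module.annihilator R X) ≤ ((t + 1 : ℕ) : WithBot ℕ∞) →
      ∀ x : ExtZ R n M X, (a * b) • x = 0 := by
  intro X hX dim_le
  obtain n_neg | n_nonneg := lt_or_ge n 0
  · have := subsingleton_extZ_of_neg M X n_neg
    exact fun x ↦ Subsingleton.elim _ _
  lift n to ℕ using n_nonneg
  rw [forall_smul_extZ_eq_zero_iff M X _ rfl]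
  refine mul_smul_ext_eq_zero_of_supportDim_le_succ (fun Y hY Y_dim_le ↦ ?_)
    (Module.supportDim_eq_ringKrullDim_quotient_annihilator R X ▸ dim_le)
  rw [← forall_smul_extZ_eq_zero_iff M Y a rfl,
    ← forall_smul_extZ_eq_zero_iff M Y b (Nat.cast_succ n).symm]
  exact h Y hY (Module.supportDim_eq_ringKrullDim_quotient_annihilator R Y ▸ Y_dim_le)

/-- If `a · Ext^n(M,X) = 0` and `a · Ext^{n+1}(M,X) = 0` for every finitely
generated `R`-module `X` of dimension at most `t`, then `a² · Ext^n(M,X) = 0` for every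
finitely generated `R`-module `X` of dimension at most `t + 1`. -/
theorem stmt1 (R : Type) [CommRing R] [IsNoetherianRing R] [IsLocalRing R]
    (M : ModuleCat.{0} R) (hM : Module.Finite R M) (a : R) (n : ℤ) (t : ℕ)
    (h : ∀ X : ModuleCat.{0} R, Module.Finite R X →
        ringKrullDim (R ⧸ Module.annihilator R X) ≤ (t : WithBot ℕ∞) →
        (∀ x : ExtZ R n M X, a • x = 0) ∧ (∀ x : ExtZ R (n + 1) M X, a • x = 0)) :
    ∀ X : ModuleCat.{0} R, Module.Finite R X →
      ringKrullDim (R ⧸ Module.annihilator R X) ≤ ((t + 1 : ℕ) : WithBot ℕ∞) →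
      ∀ x : ExtZ R n M X, (a ^ 2) • x = 0 := by
  simpa only [sq] using stmt1_general R M hM a a n t h

end
end

section
/- Let R be a Cohen-Macaulay commutative noetherian local ring of Krull dimension d, and let a be an element of R such that a·Tor_i^R(K,L) = 0 for all integers i > 0 and all modules K, L in CM_0(R). Then a^{2^{2d}}·Tor_i^R(M,N) = 0 for all integers i > 4d and all finitely generated R-modules M and N. -/
open CategoryTheory IsLocalRing

noncomputable section

/-!
Write `m` for the maximal ideal. By Krull's intersection theorem, `a` kills `Tor_i(M, N)` as soon
as it kills `Tor_i(M/mⁿM, N)` for all `n`: replacing `N` by a syzygy we may take `i = 1`, where Tor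
is the kernel of `M ⊗ K → M ⊗ F` and `M ⊗ K` is `m`-adically separated. Since Tor is symmetric, we
may assume that powers of `m` kill both `M` and `N`.

A `d`-th syzygy `K` of a module of finite length is locally free on the punctured spectrum, and
`depth K ≥ d` because `depth R = d`. Ischebeck's theorem gives `Ext^i(R/p, K) = 0` for
`i < d - dim R/p`; as `ht p + dim R/p ≤ d`, this bounds `depth K_p` below by `ht p`. So `K` lies in
`CM₀(R)`, and shifting dimension by `d` in each variable shows that `a` itself kills `Tor_i(M, N)`
for all `i > 2d`.
-/

section DimensionShifting

open Limits

variable {C D : Type*} [Category* C] [Abelian C] [Category* D] [Abelian D]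

/-- The augmentation `P₀ ⟶ Z` of a projective resolution `P` of `Z`: the map `P.π.f 0`, with `Z`
itself as its target. -/
def augmentation {Z : C} (P : ProjectiveResolution Z) : P.complex.X 0 ⟶ Z := P.π.f 0

instance {Z : C} (P : ProjectiveResolution Z) : Epi (augmentation P) :=
  inferInstanceAs (Epi (P.π.f 0))

@[simp]
lemma d_comp_augmentation {Z : C} (P : ProjectiveResolution Z) :
    P.complex.d 1 0 ≫ augmentation P = 0 :=
  P.complex_d_comp_π_f_zero

lemma d_augmentation_exact {Z : C} (P : ProjectiveResolution Z) :
    (ShortComplex.mk _ _ (d_comp_augmentation P)).Exact :=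
  P.exact₀

/-- If `p : T.X₂ ⟶ Q` is a cokernel of `T.f` and `T.g` factors as `p ≫ h`, then the homology of `T`
is the kernel of `h`. -/
def homologyIsoKernel (T : ShortComplex D) {Q : D} (p : T.X₂ ⟶ Q) (wp : T.f ≫ p = 0)
    (hp : IsColimit (CokernelCofork.ofπ p wp)) (h : Q ⟶ T.X₃) (hg : p ≫ h = T.g) :
    T.homology ≅ kernel h :=
  have desc_eq : hp.desc (CokernelCofork.ofπ T.g T.zero) = h :=
    Cofork.IsColimit.hom_ext hp ((Cofork.IsColimit.π_desc hp).trans hg.symm)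
  have wι : kernel.ι h ≫ hp.desc (CokernelCofork.ofπ T.g T.zero) = 0 := by
    rw [desc_eq, kernel.condition]
  ShortComplex.RightHomologyData.homologyIso
    { Q, p, wp, hp, wι
      H := kernel h
      ι := kernel.ι h
      hι := isKernelOfComp (𝟙 _) h (kernelIsKernel h) wι (by rw [Category.comp_id, desc_eq]) }

variable {S : ShortComplex C}

@[simp]
lemma d_comp_augmentation_comp (P : ProjectiveResolution S.X₁) :
    P.complex.d 1 0 ≫ augmentation P ≫ S.f = 0 := by
  rw [← Category.assoc, d_comp_augmentation, zero_comp]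

/-- The complex `⋯ ⟶ P₁ ⟶ P₀ ⟶ S.X₂` in which `P₀ ⟶ S.X₂` factors through `S.X₁`. -/
def spliceComplex (P : ProjectiveResolution S.X₁) : ChainComplex C ℕ :=
  ChainComplex.augment P.complex (augmentation P ≫ S.f) (by simp)

lemma spliceComplex_exactAt_succ (hS : S.ShortExact) (P : ProjectiveResolution S.X₁) (n : ℕ) :
    (spliceComplex P).ExactAt (n + 1) := by
  rw [HomologicalComplex.exactAt_iff' _ (n + 1 + 1) (n + 1) n (by simp) (by simp)]
  cases n with
  | zero =>
    have := hS.mono_f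
    let φ : ShortComplex.mk _ _ (d_comp_augmentation P) ⟶
        ShortComplex.mk (P.complex.d 1 0) (augmentation P ≫ S.f) (by simp) :=
      { τ₁ := 𝟙 _, τ₂ := 𝟙 _, τ₃ := S.f }
    exact (ShortComplex.exact_iff_of_epi_of_isIso_of_mono φ).1 (d_augmentation_exact P)
  | succ n =>
    exact (HomologicalComplex.exactAt_iff' _ (n + 1 + 1) (n + 1) n (by simp) (by simp)).1
      (P.complex_exactAt_succ n)

lemma augmentation_comp_f_comp_g (P : ProjectiveResolution S.X₁) :
    (augmentation P ≫ S.f) ≫ S.g = 0 := by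
  simp

lemma augmentation_comp_f_exact (hS : S.ShortExact) (P : ProjectiveResolution S.X₁) :
    (ShortComplex.mk (augmentation P ≫ S.f) S.g (by simp)).Exact := by
  let φ : ShortComplex.mk (augmentation P ≫ S.f) S.g (by simp) ⟶ S :=
    { τ₁ := augmentation P, τ₂ := 𝟙 _, τ₃ := 𝟙 _ }
  exact (ShortComplex.exact_iff_of_epi_of_isIso_of_mono φ).2 hS.exact

/-- The projective resolution `⋯ ⟶ P₁ ⟶ P₀ ⟶ S.X₂` of `S.X₃` obtained by splicing a resolution
`P` of `S.X₁` with a short exact sequence `0 ⟶ S.X₁ ⟶ S.X₂ ⟶ S.X₃ ⟶ 0`. -/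
def spliceResolution (hS : S.ShortExact) [Projective S.X₂] (P : ProjectiveResolution S.X₁) :
    ProjectiveResolution S.X₃ where
  complex := spliceComplex P
  projective
    | 0 => ‹Projective S.X₂›
    | n + 1 => P.projective n
  π := (ChainComplex.toSingle₀Equiv _ _).symm
    ⟨S.g, augmentation_comp_f_comp_g P⟩
  quasiIso := ⟨fun
    | 0 => by
      rw [ChainComplex.quasiIsoAt₀_iff, ShortComplex.quasiIso_iff_of_zeros' _ rfl rfl rfl]
      refine (ShortComplex.exact_and_epi_g_iff_of_iso ?_).2
        ⟨augmentation_comp_f_exact hS P, hS.epi_g⟩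
      exact ShortComplex.isoMk (Iso.refl _) (Iso.refl _) (Iso.refl _)
        ((Category.id_comp _).trans (Category.comp_id _).symm)
        ((Category.id_comp _).trans ((Category.comp_id _).trans
          (ChainComplex.toSingle₀Equiv_symm_apply_f_zero (C := spliceComplex P) S.g
            (augmentation_comp_f_comp_g P))).symm)
    | n + 1 => by
      rw [quasiIsoAt_iff_exactAt' _ _ (ChainComplex.exactAt_succ_single_obj _ _)]
      exact spliceComplex_exactAt_succ hS P n⟩

variable [EnoughProjectives C] (F : C ⥤ D) [F.Additive]

/-- Dimension shifting: `Lᵢ₊₂ F (S.X₃) ≅ Lᵢ₊₁ F (S.X₁)` if `S.X₂` is projective. -/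
def leftDerivedShiftIso (hS : S.ShortExact) [Projective S.X₂] (i : ℕ) :
    (F.leftDerived (i + 2)).obj S.X₃ ≅ (F.leftDerived (i + 1)).obj S.X₁ :=
  let P := ProjectiveResolution.of S.X₁
  let cplx := (F.mapHomologicalComplex _).obj P.complex
  let spliced := (F.mapHomologicalComplex _).obj (spliceComplex P)
  calc (F.leftDerived (i + 2)).obj S.X₃
      ≅ spliced.homology (i + 2) := (spliceResolution hS P).isoLeftDerivedObj F (i + 2)
    _ ≅ (cplx.sc' (i + 2) (i + 1) i).homology :=
      spliced.homologyIsoSc' (i + 3) (i + 2) (i + 1) (by simp) (by simp)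
    _ ≅ cplx.homology (i + 1) := (cplx.homologyIsoSc' _ _ _ (by simp) (by simp)).symm
    _ ≅ (F.leftDerived (i + 1)).obj S.X₁ := (P.isoLeftDerivedObj F (i + 1)).symm

/-- If `F` is right exact and `S.X₂` is projective, then `L₁ F (S.X₃)` is the kernel of
`F S.X₁ ⟶ F S.X₂`. -/
def leftDerivedOneIso [PreservesFiniteColimits F] (hS : S.ShortExact) [Projective S.X₂] :
    (F.leftDerived 1).obj S.X₃ ≅ kernel (F.map S.f) :=
  let P := ProjectiveResolution.of S.X₁
  let spliced := (F.mapHomologicalComplex _).obj (spliceComplex P)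
  let presentation := (ShortComplex.mk _ _ (d_comp_augmentation P)).map F
  have presentation_exact : presentation.Exact :=
    (d_augmentation_exact P).map_of_epi_of_preservesCokernel F
      (inferInstanceAs (Epi (augmentation P))) inferInstance
  have : Epi presentation.g := inferInstanceAs (Epi (F.map (augmentation P)))
  calc (F.leftDerived 1).obj S.X₃
      ≅ spliced.homology 1 := (spliceResolution hS P).isoLeftDerivedObj F 1
    _ ≅ (spliced.sc' 2 1 0).homology := spliced.homologyIsoSc' _ _ _ (by simp) (by simp)
    _ ≅ kernel (F.map S.f) := homologyIsoKernel (spliced.sc' 2 1 0)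
      (Q := F.obj S.X₁) (F.map (augmentation P)) presentation.zero presentation_exact.gIsCokernel
      (F.map S.f) (F.map_comp (augmentation P) S.f).symm

end DimensionShifting

section TensorProduct

open TensorProduct LinearMap

variable {R : Type*} [CommRing R] {K F M L G N : Type*}
  [AddCommGroup K] [Module R K] [AddCommGroup F] [Module R F] [AddCommGroup M] [Module R M]
  [AddCommGroup L] [Module R L] [AddCommGroup G] [Module R G] [AddCommGroup N] [Module R N]
  {f : K →ₗ[R] F} {p : F →ₗ[R] M} {g : L →ₗ[R] G} {q : G →ₗ[R] N}

/-- For flat resolutions `0 → K → F → M → 0` and `0 → L → G → N → 0`, the connecting homomorphism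
of the snake lemma identifies the kernel of `M ⊗ L → M ⊗ G` with that of `K ⊗ N → F ⊗ N`. -/
def kerLTensorEquivKerRTensor [Module.Flat R F] [Module.Flat R G]
    (hf : Function.Injective f) (hfp : Function.Exact f p) (hp : Function.Surjective p)
    (hg : Function.Injective g) (hgq : Function.Exact g q) (hq : Function.Surjective q) :
    ker (g.lTensor M) ≃ₗ[R] ker (f.rTensor N) :=
  have exact_ker : Function.Exact (0 : PUnit →ₗ[R] F ⊗[R] L) (g.lTensor F) :=
    (exact_zero_iff_injective _ _).2 (Module.Flat.lTensor_preserves_injective_linearMap g hg)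
  have injective_f_G := Module.Flat.rTensor_preserves_injective_linearMap (M := G) f hf
  let δ : ker (g.lTensor M) →ₗ[R] K ⊗[R] N :=
    SnakeLemma.δ' (g.lTensor K) (g.lTensor F) (g.lTensor M) (f.rTensor L) (p.rTensor L)
      (rTensor_exact L hfp hp) (f.rTensor G) (p.rTensor G) (rTensor_exact G hfp hp)
      (by simp) (by simp) (ker (g.lTensor M)).subtype (exact_subtype_ker_map _)
      (q.lTensor K) (lTensor_exact K hgq hq) (rTensor_surjective L hp) injective_f_G
  have δ_injective : Function.Injective δ := by
    rw [← exact_zero_iff_injective PUnit]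
    exact SnakeLemma.exact_δ'_right _ _ _ _ _ _ _ _ _ _ _ 0 exact_ker _ _ _ _ _ _ 0 (by simp)
      (Submodule.subtype_injective _)
  have δ_exact : Function.Exact δ (f.rTensor N) :=
    SnakeLemma.exact_δ'_left _ _ _ _ _ _ _ _ _ _ _ _ _ _ _ (q.lTensor F)
      (lTensor_exact F hgq hq) _ _ _ (by simp) (lTensor_surjective K hq)
  (LinearEquiv.ofInjective δ δ_injective).trans (LinearEquiv.ofEq _ _ δ_exact.linearMap_ker_eq.symm)

lemma ker_rTensor_eq_ker_lTensor [Module.Flat R F] [Module.Flat R G]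
    (hf : Function.Injective f) (hg : Function.Injective g) :
    ker (f.rTensor L) = ker (g.lTensor K) := by
  have ker_F : ker (g.lTensor F) = ⊥ :=
    ker_eq_bot.2 (Module.Flat.lTensor_preserves_injective_linearMap g hg)
  have ker_G : ker (f.rTensor G) = ⊥ :=
    ker_eq_bot.2 (Module.Flat.rTensor_preserves_injective_linearMap f hf)
  rw [← ker_comp_of_ker_eq_bot _ ker_F, lTensor_comp_rTensor, ← rTensor_comp_lTensor,
    ker_comp_of_ker_eq_bot _ ker_G]

variable (N f) in
/-- The kernels of `K ⊗ N → F ⊗ N` and `N ⊗ K → N ⊗ F` correspond under commutativity of `⊗`. -/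
def kerRTensorEquivKerLTensor : ker (f.rTensor N) ≃ₗ[R] ker (f.lTensor N) :=
  (TensorProduct.comm R K N).ofSubmodules _ _ <| by
    rw [← comm_comp_rTensor_comp_comm_eq, LinearEquiv.ker_comp, ker_comp]
    exact Submodule.map_equiv_eq_comap_symm _ _

end TensorProduct

section Tor

open MonoidalCategory LinearMap

variable {R : Type} [CommRing R] {S T : ShortComplex (ModuleCat.{0} R)}

/-- Dimension shifting for Tor in the second variable. -/
def torShiftRight (M : ModuleCat.{0} R) (hS : S.ShortExact) [Projective S.X₂] (i : ℕ) :
    TorMod R (i + 2) M S.X₃ ≅ TorMod R (i + 1) M S.X₁ :=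
  leftDerivedShiftIso ((tensoringLeft (ModuleCat.{0} R)).obj M) hS i

/-- `Tor₁(M, S.X₃)` as the kernel of `M ⊗ S.X₁ → M ⊗ S.X₂`. -/
def torOneEquivKer (M : ModuleCat.{0} R) (hS : S.ShortExact) [Projective S.X₂] :
    TorMod R 1 M S.X₃ ≃ₗ[R] ker (S.f.hom.lTensor M) :=
  ((leftDerivedOneIso ((tensoringLeft (ModuleCat.{0} R)).obj M) hS).trans
    (ModuleCat.kernelIsoKer _)).toLinearEquiv

/-- `Tor₁(S.X₃, T.X₃)` as the kernel of `S.X₁ ⊗ T.X₃ → S.X₂ ⊗ T.X₃`, i.e. computed from a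
presentation of the first variable. -/
def torOneEquivKerRTensor (hS : S.ShortExact) (hT : T.ShortExact)
    [Projective S.X₂] [Projective T.X₂] :
    TorMod R 1 S.X₃ T.X₃ ≃ₗ[R] ker (S.f.hom.rTensor T.X₃) :=
  (torOneEquivKer S.X₃ hT).trans <| kerLTensorEquivKerRTensor hS.moduleCat_injective_f
    ((ShortComplex.ShortExact.moduleCat_exact_iff_function_exact S).1 hS.exact)
    hS.moduleCat_surjective_g hT.moduleCat_injective_f
    ((ShortComplex.ShortExact.moduleCat_exact_iff_function_exact T).1 hT.exact)
    hT.moduleCat_surjective_g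

/-- Symmetry of `Tor₁`. -/
def torOneSymm (M N : ModuleCat.{0} R) : TorMod R 1 M N ≅ TorMod R 1 N M :=
  let hM := M.shortExact_projectiveShortComplex
  let hN := N.shortExact_projectiveShortComplex
  ((torOneEquivKerRTensor hM hN).trans
    ((kerRTensorEquivKerLTensor N M.projectiveShortComplex.f.hom).trans
      (torOneEquivKer N hM).symm)).toModuleIso

/-- Dimension shifting for Tor in the first variable. -/
def torShiftLeft (hS : S.ShortExact) [Projective S.X₂] :
    ∀ (i : ℕ) (N : ModuleCat.{0} R), TorMod R (i + 2) S.X₃ N ≅ TorMod R (i + 1) S.X₁ N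
  | 0, N =>
    let hN := N.shortExact_projectiveShortComplex
    let hL := N.projectiveShortComplex.X₁.shortExact_projectiveShortComplex
    (torShiftRight S.X₃ hN 0).trans
      ((torOneEquivKerRTensor hS hL).trans
        ((LinearEquiv.ofEq _ _ (ker_rTensor_eq_ker_lTensor hS.moduleCat_injective_f
          hN.moduleCat_injective_f)).trans (torOneEquivKer S.X₁ hN).symm)).toModuleIso
  | i + 1, N =>
    let hN := N.shortExact_projectiveShortComplex
    (torShiftRight S.X₃ hN (i + 1)).trans
      ((torShiftLeft hS i _).trans (torShiftRight S.X₁ hN i).symm)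

/-- Symmetry of Tor. -/
def torSymm : ∀ (i : ℕ) (M N : ModuleCat.{0} R), TorMod R (i + 1) M N ≅ TorMod R (i + 1) N M
  | 0, M, N => torOneSymm M N
  | i + 1, M, N =>
    let hN := N.shortExact_projectiveShortComplex
    (torShiftRight M hN i).trans ((torSymm i M _).trans (torShiftLeft hN i M).symm)

end Tor

section ExtVanishing

open Limits Abelian

section Abelian

variable {C : Type*} [Category* C] [Abelian C]

section linearYonedaObj

variable {X Y : C} (P : ProjectiveResolution X) (R : Type*) [Ring R] [Linear R C]

lemma linearYonedaObj_exactAt_zero_iff :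
    (P.complex.linearYonedaObj R Y).ExactAt 0 ↔ Subsingleton (X ⟶ Y) := by
  rw [HomologicalComplex.exactAt_iff' _ 0 0 1 (by simp) (by simp), ShortComplex.moduleCat_exact_iff]
  constructor
  · refine fun h ↦ subsingleton_of_forall_eq 0 fun x ↦ ?_
    obtain ⟨(y : P.complex.X 0 ⟶ Y), hy⟩ := h (augmentation P ≫ x)
      (show P.complex.d 1 0 ≫ augmentation P ≫ x = 0 by
        rw [← Category.assoc, d_comp_augmentation, zero_comp])
    rw [← cancel_epi (augmentation P), comp_zero]
    calc augmentation P ≫ x = P.complex.d 0 0 ≫ y := hy.symm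
      _ = 0 := by rw [P.complex.shape 0 0 (by simp), zero_comp]
  · intro h (f : P.complex.X 0 ⟶ Y) hf
    obtain ⟨(x : X ⟶ Y), hx⟩ :=
      CokernelCofork.IsColimit.desc' (d_augmentation_exact P).gIsCokernel f hf
    refine ⟨0, (map_zero _).trans ?_⟩
    calc (0 : P.complex.X 0 ⟶ Y) = augmentation P ≫ (0 : X ⟶ Y) := comp_zero.symm
      _ = augmentation P ≫ x := by rw [Subsingleton.elim x 0]
      _ = f := hx

lemma linearYonedaObj_exactAt_succ_iff [HasExt C] (n : ℕ) :
    (P.complex.linearYonedaObj R Y).ExactAt (n + 1) ↔ Subsingleton (Abelian.Ext X Y (n + 1)) := by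
  rw [HomologicalComplex.exactAt_iff' _ n (n + 1) (n + 2) (by simp) (by simp),
    ShortComplex.moduleCat_exact_iff]
  constructor
  · refine fun h ↦ subsingleton_of_forall_eq 0 fun x ↦ ?_
    obtain ⟨f, hf, rfl⟩ := P.extMk_surjective x (n + 2) rfl
    exact (P.extMk_eq_zero_iff f (n + 2) rfl hf n rfl).2 (h f hf)
  · intro h f hf
    exact (P.extMk_eq_zero_iff f (n + 2) rfl hf n rfl).1 (Subsingleton.elim _ _)

lemma linearYonedaObj_exactAt_iff [HasExt C] : ∀ n : ℕ,
    (P.complex.linearYonedaObj R Y).ExactAt n ↔ Subsingleton (Abelian.Ext X Y n)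
  | 0 => (linearYonedaObj_exactAt_zero_iff P R).trans Ext.addEquiv₀.subsingleton_congr.symm
  | n + 1 => linearYonedaObj_exactAt_succ_iff P R n

end linearYonedaObj

variable [HasExt C]

lemma subsingleton_ext_of_iso {X Y : C} (e : X ≅ Y) (Z : C) (i : ℕ)
    (h : Subsingleton (Abelian.Ext X Z i)) : Subsingleton (Abelian.Ext Y Z i) :=
  (((extFunctor i).mapIso e.op).app Z).addCommGroupIsoToAddEquiv.subsingleton_congr.2 h

lemma subsingleton_ext_of_isZero_left {X : C} (hX : IsZero X) (Y : C) (i : ℕ) :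
    Subsingleton (Abelian.Ext X Y i) :=
  have := hX.hasProjectiveDimensionLT_zero
  HasProjectiveDimensionLT.subsingleton X 0 i (Nat.zero_le i) Y

lemma subsingleton_ext_of_isZero_right (X : C) {Y : C} (hY : IsZero Y) (i : ℕ) :
    Subsingleton (Abelian.Ext X Y i) :=
  have := hY.hasInjectiveDimensionLT_zero
  HasInjectiveDimensionLT.subsingleton Y 0 i (Nat.zero_le i) X

lemma subsingleton_ext_X₂ {S : ShortComplex C} (hS : S.ShortExact) (Y : C) (i : ℕ)
    (h₁ : Subsingleton (Abelian.Ext S.X₁ Y i)) (h₃ : Subsingleton (Abelian.Ext S.X₃ Y i)) :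
    Subsingleton (Abelian.Ext S.X₂ Y i) :=
  subsingleton_of_forall_eq 0 fun x ↦ by
    obtain ⟨y, rfl⟩ := Ext.contravariant_sequence_exact₂ hS Y x (Subsingleton.elim _ _)
    rw [Subsingleton.elim y 0, Ext.comp_zero]

end Abelian

lemma support_quotient_eq_zeroLocus {R : Type*} [CommRing R] (I : Ideal R) :
    Module.support R (R ⧸ I) = PrimeSpectrum.zeroLocus I := by
  rw [Module.support_eq_zeroLocus, Ideal.annihilator_quotient]

lemma subsingleton_ext_of_forall_mem_support {R : Type} [CommRing R] [IsNoetherianRing R]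
    (K : ModuleCat.{0} R) (i : ℕ) (N : Type) [AddCommGroup N] [Module R N] [hN : Module.Finite R N]
    (h : ∀ q ∈ Module.support R N,
      Subsingleton (Abelian.Ext (ModuleCat.of R (R ⧸ q.asIdeal)) K i)) :
    Subsingleton (Abelian.Ext (ModuleCat.of R N) K i) := by
  induction hN using IsNoetherianRing.induction_on_isQuotientEquivQuotientPrime R with
  | subsingleton N => exact subsingleton_ext_of_isZero_left (ModuleCat.isZero_of_subsingleton _) K i
  | quotient N p e =>
    have p_mem : p ∈ Module.support R N := by
      rw [e.support_eq, support_quotient_eq_zeroLocus]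
      exact Set.Subset.rfl
    exact subsingleton_ext_of_iso e.symm.toModuleIso K i (h p p_mem)
  | exact N₁ N₂ N₃ f g hf hg hfg h₁ h₃ =>
    let S : ShortComplex (ModuleCat.{0} R) :=
      ShortComplex.mk (ModuleCat.ofHom f) (ModuleCat.ofHom g)
        (ModuleCat.hom_ext hfg.linearMap_comp_eq_zero)
    have hS : S.ShortExact :=
      { exact := (ShortComplex.ShortExact.moduleCat_exact_iff_function_exact S).2 hfg
        mono_f := (ModuleCat.mono_iff_injective _).2 hf
        epi_g := (ModuleCat.epi_iff_surjective _).2 hg }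
    have support_N₂ := Module.support_of_exact hfg hf hg
    exact subsingleton_ext_X₂ hS K i (h₁ fun q hq ↦ h q (support_N₂ ▸ Or.inl hq))
      (h₃ fun q hq ↦ h q (support_N₂ ▸ Or.inr hq))

variable {R : Type} [CommRing R] [IsNoetherianRing R] [IsLocalRing R]

lemma subsingleton_ext_of_quotSMulTop (X K : ModuleCat.{0} R) [Module.Finite R X]
    [Module.Finite R K] {x : R} (hx : x ∈ maximalIdeal R) (x_reg : IsSMulRegular X x) (i : ℕ)
    (h : Subsingleton (Abelian.Ext (ModuleCat.of R (QuotSMulTop x X)) K (i + 1))) :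
    Subsingleton (Abelian.Ext X K i) := by
  have divisible (y : Abelian.Ext X K i) : ∃ z : Abelian.Ext X K i, x • z = y := by
    obtain ⟨(z : Abelian.Ext X K i), hz⟩ :=
      Ext.contravariant_sequence_exact₁ x_reg.smulShortComplex_shortExact K y (add_comm 1 i)
        (Subsingleton.elim (h := h) _ _)
    refine ⟨z, ?_⟩
    calc x • z = (Ext.mk₀ (x • 𝟙 X)).comp z (zero_add i) := by
          rw [Ext.mk₀_smul, Ext.smul_comp, Ext.mk₀_id_comp]
      _ = y := hz
  by_contra h_nontrivial
  rw [not_subsingleton_iff_nontrivial] at h_nontrivial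
  refine Submodule.top_ne_ideal_smul_of_le_jacobson_annihilator (R := R)
    (M := Abelian.Ext X K i) (maximalIdeal_le_jacobson _) (top_le_iff.1 fun y _ ↦ ?_).symm
  obtain ⟨z, rfl⟩ := divisible y
  exact Submodule.smul_mem_smul hx Submodule.mem_top

end ExtVanishing

section Depth

open Abelian RingTheory.Sequence

lemma subsingleton_extMod_iff {R : Type} [CommRing R] {i : ℕ} {X Y : ModuleCat.{0} R} :
    Subsingleton (ExtMod R i X Y) ↔ Subsingleton (Abelian.Ext X Y i) := by
  let P := ProjectiveResolution.of X
  rw [← linearYonedaObj_exactAt_iff P R, HomologicalComplex.exactAt_iff_isZero_homology,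
    ← (P.isoExt i Y).isZero_iff, ModuleCat.isZero_iff_subsingleton, ExtMod]

lemma natCast_le_moduleDepth_iff {R : Type} [CommRing R] [IsLocalRing R] {n : ℕ} {M : Type}
    [AddCommGroup M] [Module R M] :
    (n : ℕ∞) ≤ moduleDepth R M ↔ ∀ i < n,
      Subsingleton (Abelian.Ext (ModuleCat.of R (ResidueField R)) (ModuleCat.of R M) i) := by
  simp only [← subsingleton_extMod_iff]
  constructor
  · intro h i hi
    by_contra h_nontrivial
    have depth_le : moduleDepth R M ≤ i :=
      sInf_le ⟨i, rfl, not_subsingleton_iff_nontrivial.1 h_nontrivial⟩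
    exact hi.not_ge (by exact_mod_cast h.trans depth_le)
  · rintro h
    refine le_sInf ?_
    rintro _ ⟨i, rfl, h_nontrivial⟩
    by_contra! hi
    exact not_subsingleton_iff_nontrivial.2 h_nontrivial (h i (by exact_mod_cast hi))

lemma ideal_smul_top_lt_top {R : Type*} [CommRing R] [IsLocalRing R] (M : Type*) [AddCommGroup M]
    [Module R M] [Module.Finite R M] [Nontrivial M] {I : Ideal R} (hI : I ≠ ⊤) :
    I • (⊤ : Submodule R M) < ⊤ :=
  lt_top_iff_ne_top.2 (Submodule.top_ne_ideal_smul_of_le_jacobson_annihilator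
    ((le_maximalIdeal hI).trans (maximalIdeal_le_jacobson _))).symm

variable {R : Type} [CommRing R] [IsLocalRing R] [IsNoetherianRing R]

lemma length_le_moduleDepth {M : Type} [AddCommGroup M] [Module R M] [Module.Finite R M]
    {rs : List R} (mem : ∀ r ∈ rs, r ∈ maximalIdeal R) (reg : IsRegular M rs) :
    (rs.length : ℕ∞) ≤ moduleDepth R M := by
  have : Nontrivial M := reg.nontrivial
  exact natCast_le_moduleDepth_iff.2 <| ModuleCat.subsingleton_ext_of_exists_isRegular
    (maximalIdeal R) (ModuleCat.of R (ResidueField R))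
    (support_quotient_eq_zeroLocus (maximalIdeal R)).subset (ModuleCat.of R M)
    (ideal_smul_top_lt_top M (Ideal.IsPrime.ne_top inferInstance)) rs mem reg

lemma le_moduleDepth_localizedModule (p : Ideal R) [p.IsPrime] (K : ModuleCat.{0} R)
    [Module.Finite R K] (n : ℕ)
    (h : ∀ i < n, Subsingleton (Abelian.Ext (ModuleCat.of R (R ⧸ p)) K i)) :
    n ≤ moduleDepth (Localization.AtPrime p) (LocalizedModule p.primeCompl K) := by
  cases subsingleton_or_nontrivial (LocalizedModule p.primeCompl K) with
  | inl _ =>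
    exact natCast_le_moduleDepth_iff.2 fun i _ ↦
      subsingleton_ext_of_isZero_right _ (ModuleCat.isZero_of_subsingleton _) i
  | inr _ =>
    have : Nontrivial K := not_subsingleton_iff_nontrivial.1 fun _ ↦
      not_subsingleton (LocalizedModule p.primeCompl K) inferInstance
    obtain ⟨rs, rfl, mem, reg⟩ := ModuleCat.exists_isRegular_of_exists_subsingleton_ext p n K
      (ideal_smul_top_lt_top K (Ideal.IsPrime.ne_top ‹_›)) (ModuleCat.of R (R ⧸ p))
      (support_quotient_eq_zeroLocus p) h
    have reg_localized := reg.1.isRegular_of_isLocalizedModule_of_mem (Localization.AtPrime p) p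
      (LocalizedModule.mkLinearMap p.primeCompl K) mem
    refine List.length_map (algebraMap R (Localization.AtPrime p)) ▸
      length_le_moduleDepth (fun r hr ↦ ?_) reg_localized
    obtain ⟨s, hs, rfl⟩ := List.mem_map.1 hr
    rw [← IsLocalization.AtPrime.map_eq_maximalIdeal p]
    exact Ideal.mem_map_of_mem _ (mem s hs)

lemma lt_of_mem_support_quotSMulTop {R : Type*} [CommRing R] {I : Ideal R} {x : R} (hx : x ∉ I)
    {q : PrimeSpectrum R} (hq : q ∈ Module.support R (QuotSMulTop x (R ⧸ I))) : I < q.asIdeal := by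
  rw [Module.support_quotSMulTop, support_quotient_eq_zeroLocus] at hq
  exact hq.1.lt_of_ne fun h ↦ hx (h ▸ hq.2 rfl)

/-- A case of Ischebeck's theorem. -/
lemma subsingleton_ext_quotient_prime (K : ModuleCat.{0} R) [Module.Finite R K] {n : ℕ}
    (h : n ≤ moduleDepth R K) (q : PrimeSpectrum R) (i : ℕ) (hi : i + Order.coheight q < n) :
    Subsingleton (Abelian.Ext (ModuleCat.of R (R ⧸ q.asIdeal)) K i) := by
  obtain ⟨I, hI⟩ := q
  induction I using IsNoetherian.induction generalizing i with
  | hgt I ih =>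
  by_cases hIm : I = maximalIdeal R
  · subst hIm
    exact natCast_le_moduleDepth_iff.1 h i (by exact_mod_cast le_self_add.trans_lt hi)
  obtain ⟨x, hxm, hxI⟩ := SetLike.exists_of_lt ((le_maximalIdeal hI.ne_top).lt_of_ne hIm)
  have x_reg : IsSMulRegular (R ⧸ I) x :=
    (isSMulRegular_quotient_iff_mem_of_smul_mem I x).2 fun _ hy ↦
      (hI.mem_or_mem hy).resolve_left hxI
  refine subsingleton_ext_of_quotSMulTop (ModuleCat.of R (R ⧸ I)) K hxm x_reg i <|
    subsingleton_ext_of_forall_mem_support K (i + 1) (QuotSMulTop x (R ⧸ I)) fun q hq ↦ ?_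
  have I_lt_q := lt_of_mem_support_quotSMulTop hxI hq
  refine ih q.asIdeal I_lt_q (i + 1) q.isPrime (lt_of_le_of_lt ?_ hi)
  calc ((i + 1 : ℕ) : ℕ∞) + Order.coheight q = i + (Order.coheight q + 1) := by
        rw [Nat.cast_add_one, add_assoc, add_comm 1]
    _ ≤ i + Order.coheight (⟨I, hI⟩ : PrimeSpectrum R) := by
        gcongr
        exact Order.coheight_add_one_le I_lt_q

lemma height_add_coheight_le_ringKrullDim {R : Type*} [CommRing R] (p : PrimeSpectrum R) :
    ((p.asIdeal.height + Order.coheight p : ℕ∞) : WithBot ℕ∞) ≤ ringKrullDim R := by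
  have : Nonempty (PrimeSpectrum R) := ⟨p⟩
  rw [ringKrullDim, Order.krullDim_eq_iSup_height_add_coheight_of_nonempty,
    PrimeSpectrum.height_eq_orderHeight]
  exact WithBot.coe_le_coe.2 (le_iSup (fun q ↦ Order.height q + Order.coheight q) p)

lemma isMCMModule_of_le_moduleDepth (K : ModuleCat.{0} R) [Module.Finite R K] {n : ℕ}
    (hR : ringKrullDim R ≤ n) (hK : n ≤ moduleDepth R K) : IsMCMModule R K := by
  intro p hp
  have height_add_coheight_le : p.height + Order.coheight (⟨p, hp⟩ : PrimeSpectrum R) ≤ n := by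
    exact_mod_cast (height_add_coheight_le_ringKrullDim ⟨p, hp⟩).trans hR
  have coheight_ne_top : Order.coheight (⟨p, hp⟩ : PrimeSpectrum R) ≠ ⊤ :=
    ne_top_of_le_ne_top (ENat.natCast_ne_top n) (le_add_self.trans height_add_coheight_le)
  obtain ⟨m, hm⟩ := ENat.ne_top_iff_exists.1 (Ideal.height_ne_top hp.ne_top)
  rw [IsLocalization.AtPrime.ringKrullDim_eq_height p, ← hm]
  rw [← hm] at height_add_coheight_le
  refine WithBot.coe_le_coe.2 (le_moduleDepth_localizedModule p K m fun i hi ↦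
    subsingleton_ext_quotient_prime K hK ⟨p, hp⟩ i (lt_of_lt_of_le ?_ height_add_coheight_le))
  exact (ENat.add_lt_add_iff_right coheight_ne_top).2 (by exact_mod_cast hi)

end Depth

section Syzygy

open Abelian

/-- `IsSyzygy n M K` says that `K` is an `n`-th syzygy of `M` in a (not necessarily minimal)
resolution by finitely generated free modules: there is an exact sequence
`0 → K → Fₙ₋₁ → ⋯ → F₀ → M → 0`, given here as a chain of short exact sequences. -/
inductive IsSyzygy {R : Type} [CommRing R] : ℕ → ModuleCat.{0} R → ModuleCat.{0} R → Prop
  | zero (M : ModuleCat.{0} R) : IsSyzygy 0 M M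
  | succ {n : ℕ} {M : ModuleCat.{0} R} {S : ShortComplex (ModuleCat.{0} R)} (hS : S.ShortExact)
      [Module.Finite R S.X₂] [Module.Free R S.X₂] (h : IsSyzygy n M S.X₃) :
      IsSyzygy (n + 1) M S.X₁

variable {R : Type} [CommRing R] {n : ℕ} {M K : ModuleCat.{0} R}

lemma nonempty_torIso_left (hK : IsSyzygy n M K) (N : ModuleCat.{0} R) (i : ℕ) :
    Nonempty (TorMod R (i + n + 1) M N ≅ TorMod R (i + 1) K N) := by
  induction hK generalizing i with
  | zero M => exact ⟨Iso.refl _⟩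
  | @succ n _ _ hS _ _ _ ih =>
    obtain ⟨e⟩ := ih (i + 1)
    rw [add_right_comm i 1 n] at e
    exact ⟨e.trans (torShiftLeft hS i N)⟩

lemma nonempty_torIso_right (hK : IsSyzygy n M K) (N : ModuleCat.{0} R) (i : ℕ) :
    Nonempty (TorMod R (i + n + 1) N M ≅ TorMod R (i + 1) N K) := by
  induction hK generalizing i with
  | zero M => exact ⟨Iso.refl _⟩
  | @succ n _ _ hS _ _ _ ih =>
    obtain ⟨e⟩ := ih (i + 1)
    rw [add_right_comm i 1 n] at e
    exact ⟨e.trans (torShiftRight N hS i)⟩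

lemma subsingleton_ext_of_free (X P : ModuleCat.{0} R) [Module.Finite R P] [Module.Free R P]
    (i : ℕ) (h : Subsingleton (Abelian.Ext X (ModuleCat.of R R) i)) :
    Subsingleton (Abelian.Ext X P i) := by
  let b := Module.Free.chooseBasis R P
  let coord j : P ⟶ ModuleCat.of R R := ModuleCat.ofHom (b.coord j)
  let vec j : ModuleCat.of R R ⟶ P := ModuleCat.ofHom (LinearMap.toSpanSingleton R P (b j))
  have id_eq_sum : 𝟙 P = ∑ j, coord j ≫ vec j := by
    ext v
    simp [coord, vec, ModuleCat.hom_sum]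
  refine subsingleton_of_forall_eq 0 fun y ↦ ?_
  calc y = y.comp (Ext.mk₀ (∑ j, coord j ≫ vec j)) (add_zero i) := by
        rw [← id_eq_sum, Ext.comp_mk₀_id]
    _ = ∑ j, (y.comp (Ext.mk₀ (coord j)) (add_zero i)).comp (Ext.mk₀ (vec j)) (add_zero i) := by
        simp [Ext.mk₀_sum, Ext.comp_sum]
    _ = 0 := Finset.sum_eq_zero fun j _ ↦ by
        rw [Subsingleton.elim (y.comp (Ext.mk₀ (coord j)) (add_zero i)) 0, Ext.zero_comp]

lemma subsingleton_ext_of_isSyzygy (hK : IsSyzygy n M K) (X : ModuleCat.{0} R)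
    (h : ∀ i < n, Subsingleton (Abelian.Ext X (ModuleCat.of R R) i)) :
    ∀ i < n, Subsingleton (Abelian.Ext X K i) := by
  induction hK with
  | zero => exact fun i hi ↦ absurd hi (Nat.not_lt_zero i)
  | @succ n _ S hS _ _ _ ih =>
    intro i hi
    have ext_X₂ := subsingleton_ext_of_free X S.X₂ i (h i hi)
    cases i with
    | zero =>
      have := hS.mono_f
      exact (Ext.postcomp_mk₀_injective_of_mono X S.f).subsingleton
    | succ i =>
      have ext_X₃ := ih (fun j hj ↦ h j (by omega)) i (by omega)
      refine subsingleton_of_forall_eq 0 fun y ↦ ?_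
      obtain ⟨z, rfl⟩ := Ext.covariant_sequence_exact₁ X hS y (Subsingleton.elim _ _) rfl
      rw [Subsingleton.elim z 0, Ext.zero_comp]

lemma le_moduleDepth_of_isSyzygy [IsLocalRing R] (hK : IsSyzygy n M K)
    (hR : n ≤ moduleDepth R R) : n ≤ moduleDepth R K :=
  natCast_le_moduleDepth_iff.2 <|
    subsingleton_ext_of_isSyzygy hK _ (natCast_le_moduleDepth_iff.1 hR)

lemma projective_of_exact {R A B C : Type*} [Ring R] [AddCommGroup A] [Module R A] [AddCommGroup B]
    [Module R B] [AddCommGroup C] [Module R C] [Module.Projective R B] [Module.Projective R C]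
    {f : A →ₗ[R] B} {g : B →ₗ[R] C} (hf : Function.Injective f) (hfg : Function.Exact f g)
    (hg : Function.Surjective g) : Module.Projective R A := by
  obtain ⟨s, hs⟩ := Module.projective_lifting_property g LinearMap.id hg
  obtain ⟨e, -⟩ := hfg.splitSurjectiveEquiv hf ⟨s, hs⟩
  exact Module.Projective.of_split (e.symm.toLinearMap ∘ₗ LinearMap.inl R A C)
    (LinearMap.fst R A C ∘ₗ e.toLinearMap) (by ext x; simp)

variable [IsNoetherianRing R]

lemma finite_of_isSyzygy (hK : IsSyzygy n M K) [Module.Finite R M] : Module.Finite R K := by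
  cases hK with
  | zero => assumption
  | succ hS => exact Module.Finite.of_injective _ hS.moduleCat_injective_f

lemma exists_isSyzygy (n : ℕ) (M : ModuleCat.{0} R) [Module.Finite R M] : ∃ K, IsSyzygy n M K := by
  induction n with
  | zero => exact ⟨M, .zero M⟩
  | succ n ih =>
    obtain ⟨L, hL⟩ := ih
    have := finite_of_isSyzygy hL
    obtain ⟨m, f, hf⟩ := Module.Finite.exists_fin' R L
    have : Module.Finite R f.shortComplexKer.X₂ := inferInstanceAs (Module.Finite R (Fin m → R))
    have : Module.Free R f.shortComplexKer.X₂ := inferInstanceAs (Module.Free R (Fin m → R))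
    exact ⟨_, .succ (LinearMap.shortExact_shortComplexKer hf) hL⟩

lemma free_localizedModule_of_isSyzygy (hK : IsSyzygy n M K) (p : Ideal R)
    [p.IsPrime] (h : Module.Free (Localization.AtPrime p) (LocalizedModule p.primeCompl M)) :
    Module.Free (Localization.AtPrime p) (LocalizedModule p.primeCompl K) := by
  induction hK with
  | zero M => exact h
  | @succ _ _ S hS _ _ _ ih =>
    have := ih h
    have : Module.Finite R S.X₁ := Module.Finite.of_injective _ hS.moduleCat_injective_f
    have : Module.Projective (Localization.AtPrime p) (LocalizedModule p.primeCompl S.X₂) :=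
      Module.projective_of_isLocalizedModule p.primeCompl (LocalizedModule.mkLinearMap _ _)
    have : Module.Projective (Localization.AtPrime p) (LocalizedModule p.primeCompl S.X₁) :=
      projective_of_exact (f := LocalizedModule.map p.primeCompl S.f.hom)
        (g := LocalizedModule.map p.primeCompl S.g.hom)
        (LocalizedModule.map_injective _ _ hS.moduleCat_injective_f)
        (LocalizedModule.map_exact _ _ _
          ((ShortComplex.ShortExact.moduleCat_exact_iff_function_exact S).1 hS.exact))
        (LocalizedModule.map_surjective _ _ hS.moduleCat_surjective_g)
    exact Module.free_of_flat_of_isLocalRing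

variable [IsLocalRing R]

lemma memCM0_of_isSyzygy {d : ℕ} (hCM : IsCMLocalRing R)
    (hd : ringKrullDim R = d) [Module.Finite R M] {m : ℕ}
    (hM : maximalIdeal R ^ m ≤ Module.annihilator R M) (hK : IsSyzygy d M K) : MemCM0 R K := by
  have := finite_of_isSyzygy hK
  have depth_R : moduleDepth R R = d := WithBot.coe_injective (hCM.trans hd)
  refine ⟨this, isMCMModule_of_le_moduleDepth K hd.le (le_moduleDepth_of_isSyzygy hK depth_R.ge),
    fun p hp hpm ↦ free_localizedModule_of_isSyzygy hK p ?_⟩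
  obtain ⟨x, hxm, hxp⟩ := SetLike.exists_of_lt ((le_maximalIdeal hp.ne_top).lt_of_ne hpm)
  have : Subsingleton (LocalizedModule p.primeCompl M) :=
    LocalizedModule.subsingleton_iff.2 fun v ↦ ⟨x ^ m, fun h ↦ hxp (hp.mem_of_pow_mem _ h),
      Module.mem_annihilator.1 (hM (Ideal.pow_mem_pow hxm m)) v⟩
  infer_instance

end Syzygy

section Krull

open TensorProduct

lemma range_rTensor_smul_top_subtype_le {R : Type*} [CommRing R] (I : Ideal R) (M N : Type*)
    [AddCommGroup M] [Module R M] [AddCommGroup N] [Module R N] :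
    LinearMap.range ((I • ⊤ : Submodule R M).subtype.rTensor N) ≤ I • ⊤ := by
  rintro _ ⟨u, rfl⟩
  induction u with
  | zero => rw [map_zero]; exact zero_mem _
  | add u v hu hv => rw [map_add]; exact add_mem hu hv
  | tmul s t =>
    have : (s : M) ⊗ₜ[R] t ∈ I • (⊤ : Submodule R M).map ((TensorProduct.mk R M N).flip t) := by
      rw [← Submodule.map_smul'']
      exact ⟨s, s.2, rfl⟩
    exact Submodule.smul_mono le_rfl le_top this

lemma ideal_le_annihilator_quotient {R : Type*} [CommRing R] (I : Ideal R) (M : Type*)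
    [AddCommGroup M] [Module R M] :
    I ≤ Module.annihilator R (M ⧸ (I • ⊤ : Submodule R M)) := by
  rw [Submodule.annihilator_quotient]
  exact fun r hr ↦ Submodule.mem_colon.2 fun v _ ↦ Submodule.smul_mem_smul hr trivial

variable {R : Type} [CommRing R] [IsNoetherianRing R] [IsLocalRing R] {M N : ModuleCat.{0} R}
  [Module.Finite R M] [Module.Finite R N] {a : R}

/-- The truncation `M/mⁿM` of `M`, where `m` is the maximal ideal of `R`. -/
abbrev quotMaximalIdealPow (M : ModuleCat.{0} R) (n : ℕ) : ModuleCat.{0} R :=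
  ModuleCat.of R (M ⧸ (maximalIdeal R ^ n • ⊤ : Submodule R M))

lemma mem_annihilator_ker_lTensor_of_forall_quotient {F K : Type*} [AddCommGroup F] [Module R F]
    [AddCommGroup K] [Module R K] [Module.Finite R K] (f : K →ₗ[R] F)
    (h : ∀ n, a ∈ (LinearMap.ker (f.lTensor (quotMaximalIdealPow M n))).annihilator) :
    a ∈ (LinearMap.ker (f.lTensor M)).annihilator := by
  refine Submodule.mem_annihilator.2 fun x hx ↦ ?_
  rw [← Submodule.mem_bot R, ← Ideal.iInf_pow_smul_eq_bot_of_isLocalRing (maximalIdeal R)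
    (maximalIdeal.isMaximal R).ne_top, Submodule.mem_iInf]
  intro n
  let mkQ := (maximalIdeal R ^ n • ⊤ : Submodule R M).mkQ
  have mkQ_x_mem : mkQ.rTensor K x ∈ LinearMap.ker (f.lTensor _) := by
    rw [LinearMap.mem_ker, ← LinearMap.comp_apply, LinearMap.lTensor_comp_rTensor,
      ← LinearMap.rTensor_comp_lTensor, LinearMap.comp_apply, LinearMap.mem_ker.1 hx, map_zero]
  have mkQ_smul : mkQ.rTensor K (a • x) = 0 :=
    (map_smul _ a x).trans (Submodule.mem_annihilator.1 (h n) _ mkQ_x_mem)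
  exact range_rTensor_smul_top_subtype_le _ _ _ <|
    (rTensor_exact K (LinearMap.exact_subtype_mkQ _) (Submodule.mkQ_surjective _) _).1 mkQ_smul

lemma mem_annihilator_torMod_one_of_forall_quotient
    (h : ∀ n, a ∈ Module.annihilator R (TorMod R 1 (quotMaximalIdealPow M n) N)) :
    a ∈ Module.annihilator R (TorMod R 1 M N) := by
  obtain ⟨m, g, hg⟩ := Module.Finite.exists_fin' R N
  have hS := LinearMap.shortExact_shortComplexKer hg
  have : Projective g.shortComplexKer.X₂ :=
    inferInstanceAs (Projective (ModuleCat.of R (Fin m → R)))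
  rw [(torOneEquivKer M hS).annihilator_eq]
  refine mem_annihilator_ker_lTensor_of_forall_quotient (K := LinearMap.ker g) _ fun n ↦ ?_
  exact (torOneEquivKer (quotMaximalIdealPow M n) hS).annihilator_eq.le (h n)

lemma mem_annihilator_torMod_succ_of_forall_quotient {i : ℕ}
    (h : ∀ n, a ∈ Module.annihilator R (TorMod R (i + 1) (quotMaximalIdealPow M n) N)) :
    a ∈ Module.annihilator R (TorMod R (i + 1) M N) := by
  obtain ⟨L, hL⟩ := exists_isSyzygy i N
  have := finite_of_isSyzygy hL
  have annihilator_eq (M' : ModuleCat.{0} R) :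
      Module.annihilator R (TorMod R (i + 1) M' N) = Module.annihilator R (TorMod R 1 M' L) := by
    obtain ⟨e⟩ := nonempty_torIso_right hL M' 0
    rw [zero_add] at e
    exact e.toLinearEquiv.annihilator_eq
  simp only [annihilator_eq] at h ⊢
  exact mem_annihilator_torMod_one_of_forall_quotient h

end Krull

theorem stmt5_general (R : Type) [CommRing R] [IsNoetherianRing R] [IsLocalRing R]
    (hCM : IsCMLocalRing R) (d : ℕ) (hd : ringKrullDim R = (d : WithBot ℕ∞)) (a : R)
    (h : ∀ i : ℕ, 0 < i → ∀ K L : ModuleCat.{0} R, MemCM0 R K → MemCM0 R L →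
        ∀ x : TorMod R i K L, a • x = 0) :
    ∀ i : ℕ, 2 * d < i → ∀ M N : ModuleCat.{0} R, Module.Finite R M → Module.Finite R N →
      ∀ x : TorMod R i M N, a • x = 0 := by
  intro i hi M N _ _
  obtain ⟨j, rfl⟩ : ∃ j, i = j + d + d + 1 := ⟨i - (d + d + 1), by omega⟩
  rw [← Module.mem_annihilator]
  refine mem_annihilator_torMod_succ_of_forall_quotient fun m ↦ ?_
  rw [(torSymm _ _ N).toLinearEquiv.annihilator_eq]
  refine mem_annihilator_torMod_succ_of_forall_quotient fun n ↦ ?_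
  obtain ⟨K, hK⟩ := exists_isSyzygy d (quotMaximalIdealPow N n)
  obtain ⟨L, hL⟩ := exists_isSyzygy d (quotMaximalIdealPow M m)
  obtain ⟨shiftLeft⟩ := nonempty_torIso_left hK (quotMaximalIdealPow M m) (j + d)
  obtain ⟨shiftRight⟩ := nonempty_torIso_right hL K j
  rw [(shiftLeft.trans shiftRight).toLinearEquiv.annihilator_eq, Module.mem_annihilator]
  exact h _ j.succ_pos K L
    (memCM0_of_isSyzygy hCM hd (ideal_le_annihilator_quotient _ N) hK)
    (memCM0_of_isSyzygy hCM hd (ideal_le_annihilator_quotient _ M) hL)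

/-- Let `R` be a Cohen-Macaulay noetherian local ring of Krull dimension `d`
and let `a ∈ R` annihilate `Tor_i(K,L)` for all `i > 0` and all `K, L ∈ CM₀(R)`. Then
`a^(2^(2d)) · Tor_i(M,N) = 0` for all `i > 4d` and all finitely generated `M, N`. -/
theorem stmt5 (R : Type) [CommRing R] [IsNoetherianRing R] [IsLocalRing R]
    (hCM : IsCMLocalRing R) (d : ℕ) (hd : ringKrullDim R = (d : WithBot ℕ∞)) (a : R)
    (h : ∀ i : ℕ, 0 < i → ∀ K L : ModuleCat.{0} R, MemCM0 R K → MemCM0 R L →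
        ∀ x : TorMod R i K L, a • x = 0) :
    ∀ i : ℕ, 4 * d < i → ∀ M N : ModuleCat.{0} R, Module.Finite R M → Module.Finite R N →
      ∀ x : TorMod R i M N, (a ^ (2 ^ (2 * d))) • x = 0 := by
  intro i hi M N hM hN x
  have : a • x = 0 := stmt5_general R hCM d hd a h i (by omega) M N hM hN x
  rw [← Nat.sub_add_cancel (Nat.one_le_two_pow (n := 2 * d)), pow_succ, mul_smul, this, smul_zero]

end
end
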